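/- arXiv:2102.06935 — 3 statements merged into one kernel-verified Lean document; each statement's English description precedes it below -/
import Mathlib

section
/- Pointwise strong q-stability bounds: for every n ≥ 1 and every measurable A ⊆ 𝒳ⁿ with P_X^{⊗n}(A) > 0, setting α := −(1/n) log P_X^{⊗n}(A), one has −(1/n) log ‖P_{X|Y}^{⊗n}(A|·)‖_q ≥ Θ_{q'}(α) for every q ∈ [1,∞); and for every q ∈ (−∞,1) \ {0}, −(1/n) log ‖P_{X|Y}^{⊗n}(A|·)‖_q ≤ φ̂_{q'}(α) if α > 0 and −(1/n) log ‖P_{X|Y}^{⊗n}(A|·)‖_q ≤ 0 if α = 0; here q' := q/(q−1) (with q' := ∞ for q = 1 and the convention t/∞ := 0). -/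
open MeasureTheory ProbabilityTheory Set Filter
open scoped ENNReal NNReal BigOperators Classical Topology

noncomputable section

namespace BL

variable {X : Type*} {Y : Type*} [MeasurableSpace X] [MeasurableSpace Y]

/-! ### Extended logarithm, exponential, and division conventions -/

/-- Extended logarithm `ℝ≥0∞ → EReal`, with `log 0 = ⊥` and `log ⊤ = ⊤`. -/
def elog (x : ℝ≥0∞) : EReal :=
  if x = 0 then ⊥ else if x = ⊤ then ⊤ else ((Real.log x.toReal : ℝ) : EReal)

/-- Extended exponential `EReal → ℝ≥0∞`, with `exp ⊥ = 0` and `exp ⊤ = ⊤`. -/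
def eexp (x : EReal) : ℝ≥0∞ :=
  if x = ⊥ then 0 else if x = ⊤ then ⊤ else ENNReal.ofReal (Real.exp x.toReal)

/-- Division of an extended real by a real, with the conventions `a/0 = +∞` for `a > 0`,
`a/0 = -∞` for `a < 0` and `0/0 = 0`. -/
def ediv (x : EReal) (c : ℝ) : EReal :=
  if c = 0 then (if 0 < x then ⊤ else if x < 0 then ⊥ else 0)
  else x * ((c⁻¹ : ℝ) : EReal)

/-- Division of a real by an extended real, with the convention `t/(±∞) = 0`. -/
def divE (t : ℝ) (r : EReal) : EReal :=
  if r = ⊤ ∨ r = ⊥ then 0 else ((t / r.toReal : ℝ) : EReal)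

/-- Hölder conjugate, as an extended real (`conj 1 = ⊤`). -/
def conj (q : ℝ) : EReal := if q = 1 then ⊤ else ((q / (q - 1) : ℝ) : EReal)

/-! ### Norms with a real (possibly negative) exponent -/

/-- `p`-"norm" of an `ℝ≥0∞`-valued function (`p` a nonzero real). -/
def enorm (P : Measure X) (F : X → ℝ≥0∞) (p : ℝ) : ℝ≥0∞ :=
  (∫⁻ x, F x ^ p ∂P) ^ (1 / p)

/-- `∞`-norm (essential supremum) of an `ℝ≥0∞`-valued function. -/
def enormInf (P : Measure X) (F : X → ℝ≥0∞) : ℝ≥0∞ := essSup F P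

/-- `p`-"norm" of a nonnegative real-valued function. -/
def rnorm (P : Measure X) (f : X → ℝ) (p : ℝ) : ℝ≥0∞ :=
  enorm P (fun x => ENNReal.ofReal (f x)) p

/-- `∞`-norm of a nonnegative real-valued function. -/
def rnormInf (P : Measure X) (f : X → ℝ) : ℝ≥0∞ :=
  enormInf P (fun x => ENNReal.ofReal (f x))

/-! ### Divergences -/

/-- Kullback--Leibler divergence, valued in `EReal` (equal to `⊤` when undefined). -/
def KL (Q P : Measure X) : EReal :=
  if Q ≪ P ∧ Integrable (fun x => Real.log (Q.rnDeriv P x).toReal) Q then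
    ((∫ x, Real.log (Q.rnDeriv P x).toReal ∂Q : ℝ) : EReal)
  else ⊤

/-- Rényi divergence of order `s` (`s = 1` gives the KL divergence). -/
def Renyi (s : ℝ) (Q P : Measure X) : EReal :=
  if s = 1 then KL Q P
  else (((s - 1)⁻¹ : ℝ) : EReal) *
    elog (∫⁻ x, Q.rnDeriv (Q + P) x ^ s * P.rnDeriv (Q + P) x ^ (1 - s) ∂(Q + P))

/-- First marginal of a measure on a product space. -/
def m1 (P : Measure (X × Y)) : Measure X := P.map Prod.fst

/-- Second marginal of a measure on a product space. -/
def m2 (P : Measure (X × Y)) : Measure Y := P.map Prod.snd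

/-- Couplings of a pair of (probability) measures. -/
def couplings (μ : Measure X) (ν : Measure Y) : Set (Measure (X × Y)) :=
  {π | IsProbabilityMeasure π ∧ π.map Prod.fst = μ ∧ π.map Prod.snd = ν}

/-- `𝔻(QX, QY ‖ P)` : minimum relative entropy over couplings. -/
def Dmin (QX : Measure X) (QY : Measure Y) (P : Measure (X × Y)) : EReal :=
  ⨅ (π : Measure (X × Y)) (_ : π ∈ couplings QX QY), KL π P

/-! ### The functions φ and their envelopes -/

/-- `φ̲(s,t)`. -/
def phiL (P : Measure (X × Y)) (s t : ℝ) : EReal :=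
  ⨅ (QX : Measure X) (QY : Measure Y) (_ : IsProbabilityMeasure QX)
    (_ : IsProbabilityMeasure QY) (_ : QX ≪ m1 P) (_ : QY ≪ m2 P)
    (_ : KL QX (m1 P) = (s : EReal)) (_ : KL QY (m2 P) = (t : EReal)),
    Dmin QX QY P

/-- `φ̄(s,t)`. -/
def phiU (P : Measure (X × Y)) (s t : ℝ) : EReal :=
  ⨆ (QX : Measure X) (QY : Measure Y) (_ : IsProbabilityMeasure QX)
    (_ : IsProbabilityMeasure QY) (_ : QX ≪ m1 P) (_ : QY ≪ m2 P)
    (_ : KL QX (m1 P) = (s : EReal)) (_ : KL QY (m2 P) = (t : EReal)),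
    Dmin QX QY P

/-- Lower convex envelope on `[0,∞)²`, via convex combinations of (at most) 4 points
(Carathéodory). -/
def lce2 (F : ℝ → ℝ → EReal) (a b : ℝ) : EReal :=
  ⨅ (q : Fin 4 → ℝ) (x : Fin 4 → ℝ × ℝ) (_ : ∀ i, 0 ≤ q i) (_ : ∑ i, q i = 1)
    (_ : ∀ i, 0 ≤ (x i).1 ∧ 0 ≤ (x i).2)
    (_ : ∑ i, q i * (x i).1 = a) (_ : ∑ i, q i * (x i).2 = b),
    ∑ i, (q i : EReal) * F (x i).1 (x i).2

/-- Upper concave envelope on `[0,∞)²`. -/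
def uce2 (F : ℝ → ℝ → EReal) (a b : ℝ) : EReal :=
  ⨆ (q : Fin 4 → ℝ) (x : Fin 4 → ℝ × ℝ) (_ : ∀ i, 0 ≤ q i) (_ : ∑ i, q i = 1)
    (_ : ∀ i, 0 ≤ (x i).1 ∧ 0 ≤ (x i).2)
    (_ : ∑ i, q i * (x i).1 = a) (_ : ∑ i, q i * (x i).2 = b),
    ∑ i, (q i : EReal) * F (x i).1 (x i).2

/-- Lower convex envelope on `[0,∞)`. -/
def lce1 (F : ℝ → EReal) (a : ℝ) : EReal :=
  ⨅ (q : Fin 3 → ℝ) (x : Fin 3 → ℝ) (_ : ∀ i, 0 ≤ q i) (_ : ∑ i, q i = 1)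
    (_ : ∀ i, 0 ≤ x i) (_ : ∑ i, q i * x i = a),
    ∑ i, (q i : EReal) * F (x i)

/-- Upper concave envelope on `[0,∞)`. -/
def uce1 (F : ℝ → EReal) (a : ℝ) : EReal :=
  ⨆ (q : Fin 3 → ℝ) (x : Fin 3 → ℝ) (_ : ∀ i, 0 ≤ q i) (_ : ∑ i, q i = 1)
    (_ : ∀ i, 0 ≤ x i) (_ : ∑ i, q i * x i = a),
    ∑ i, (q i : EReal) * F (x i)

/-- `Θ̲(α,β)`: increasing lower convex envelope of `φ̲`. -/
def ThetaL (P : Measure (X × Y)) (α β : ℝ) : EReal :=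
  ⨅ (s : ℝ) (t : ℝ) (_ : α ≤ s) (_ : β ≤ t), lce2 (phiL P) s t

/-- `Θ̄(α,β)`: increasing upper concave envelope of `φ̄`. -/
def ThetaU (P : Measure (X × Y)) (α β : ℝ) : EReal :=
  ⨆ (s : ℝ) (t : ℝ) (_ : 0 ≤ s) (_ : s ≤ α) (_ : 0 ≤ t) (_ : t ≤ β), uce2 (phiU P) s t

/-- `φ_r(s) = inf_{t ≥ 0} (φ̲(s,t) - t/r)` for `r ∈ [1,∞]` (`r` an extended real). -/
def phiRinf (P : Measure (X × Y)) (r : EReal) (s : ℝ) : EReal :=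
  ⨅ (t : ℝ) (_ : 0 ≤ t), phiL P s t - divE t r

/-- `Θ_r(α)` for `r ∈ [1,∞]`. -/
def ThetaGe1 (P : Measure (X × Y)) (r : EReal) (α : ℝ) : EReal :=
  ⨅ (s : ℝ) (_ : α ≤ s), lce1 (phiRinf P r) s

/-- `φ_r(s) = sup_{t ≥ 0} (φ̄(s,t) - t/r)` for `r ∈ (0,1)`. -/
def phiSupR (P : Measure (X × Y)) (r : ℝ) (s : ℝ) : EReal :=
  ⨆ (t : ℝ) (_ : 0 ≤ t), phiU P s t - divE t (r : EReal)

/-- `φ_r(s)` for `r < 0`. -/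
def phiNeg (P : Measure (X × Y)) (r : ℝ) (s : ℝ) : EReal :=
  ⨆ (QX : Measure X) (_ : IsProbabilityMeasure QX) (_ : QX ≪ m1 P)
    (_ : KL QX (m1 P) = (s : EReal)),
    ⨅ (QY : Measure Y) (_ : IsProbabilityMeasure QY) (_ : QY ≪ m2 P),
      Dmin QX QY P - ediv (KL QY (m2 P)) r

/-- `φ_r(s)` for `r < 1`, `r ≠ 0`. -/
def phiLT1 (P : Measure (X × Y)) (r : ℝ) (s : ℝ) : EReal :=
  if 0 < r then phiSupR P r s else phiNeg P r s

/-- `Θ_r(α)` for `r < 1`, `r ≠ 0`. -/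
def ThetaLT1 (P : Measure (X × Y)) (r : ℝ) (α : ℝ) : EReal :=
  ⨆ (s : ℝ) (_ : 0 ≤ s) (_ : s ≤ α), uce1 (phiLT1 P r) s

/-- `α_max = sup {-log μ(A) : μ(A) > 0}`. -/
def alphaMax (μ : Measure X) : EReal :=
  ⨆ (A : Set X) (_ : MeasurableSet A) (_ : μ A ≠ 0), -elog (μ A)

/-! ### Entropies -/

/-- `Ent_{p,p}(f)`. -/
def entPP (P : Measure X) (f : X → ℝ) (p : ℝ) : EReal :=
  (((∫ x, f x ^ p * Real.log (f x ^ p) ∂P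
      - (∫ x, f x ^ p ∂P) * Real.log (∫ x, f x ^ p ∂P))
     / (∫ x, f x ^ p ∂P) : ℝ) : EReal)

/-- `Ent_{p,p̂}(f)` for a nonzero real `p` and a real `p̂`. -/
def ent (P : Measure X) (f : X → ℝ) (p phat : ℝ) : EReal :=
  if phat = p then entPP P f p
  else if phat = 0 then -elog (P {x | 0 < f x})
  else ((p * phat / (p - phat) : ℝ) : EReal) * (elog (rnorm P f p) - elog (rnorm P f phat))

/-- `Ent_{p,∞}(f)` for a nonzero real `p`. -/
def entTop (P : Measure X) (f : X → ℝ) (p : ℝ) : EReal :=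
  if rnormInf P f = ⊤ then (if 0 < p then ⊤ else ⊥)
  else ((-p : ℝ) : EReal) * (elog (rnorm P f p) - elog (rnormInf P f))

/-- `Ent_{p,p*}(f)` for a nonzero real `p` and `p* ∈ [0,∞]`. -/
def entE (P : Measure X) (f : X → ℝ) (p : ℝ) (ps : ℝ≥0∞) : EReal :=
  if ps = ⊤ then entTop P f p else ent P f p ps.toReal

/-- Admissible functions: measurable, nonnegative, not a.e. zero. -/
def Adm (P : Measure X) (f : X → ℝ) : Prop :=
  Measurable f ∧ (∀ x, 0 ≤ f x) ∧ ¬ f =ᵐ[P] (fun _ => 0)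

/-! ### Products -/

/-- `n`-fold product measure. -/
def piM (n : ℕ) (P : Measure X) : Measure (Fin n → X) := Measure.pi fun _ => P

def fstv {n : ℕ} (z : Fin n → X × Y) : Fin n → X := fun i => (z i).1
def sndv {n : ℕ} (z : Fin n → X × Y) : Fin n → Y := fun i => (z i).2

/-- `⟨f,g⟩ = ∫ f(xⁿ) g(yⁿ) dP^{⊗n}`. -/
def innerFG (P : Measure (X × Y)) (n : ℕ) (f : (Fin n → X) → ℝ) (g : (Fin n → Y) → ℝ) :
    ℝ≥0∞ :=
  ∫⁻ z, ENNReal.ofReal (f (fstv z)) * ENNReal.ofReal (g (sndv z)) ∂(piM n P)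

/-- The set `A × B` viewed inside `(X × Y)ⁿ`. -/
def prodSet {n : ℕ} (A : Set (Fin n → X)) (B : Set (Fin n → Y)) : Set (Fin n → X × Y) :=
  {z | fstv z ∈ A ∧ sndv z ∈ B}

/-! ### Kernels -/

/-- Product of kernel measures `⊗ᵢ κ(yᵢ)`. -/
def kpi {n : ℕ} (κ : Kernel Y X) (y : Fin n → Y) : Measure (Fin n → X) :=
  Measure.pi fun i => κ (y i)

/-- The conditional expectation operator `P_{X|Y}^{⊗n}(f)`. -/
def condOp {n : ℕ} (κ : Kernel Y X) (f : (Fin n → X) → ℝ) : (Fin n → Y) → ℝ≥0∞ :=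
  fun y => ∫⁻ x, ENNReal.ofReal (f x) ∂(kpi κ y)

/-- `κ` is a regular conditional probability of the first coordinate given the second. -/
def IsCondKernel (P : Measure (X × Y)) (κ : Kernel Y X) : Prop :=
  ∀ (A : Set X) (B : Set Y), MeasurableSet A → MeasurableSet B →
    P (A ×ˢ B) = ∫⁻ y in B, κ y A ∂(m2 P)

/-! ### η and `Λ̲*` -/

/-- The function `η_{p,p̂}(α,s)`. -/
def eta (p phat α : ℝ) (s : EReal) : EReal :=
  if 0 ≤ p ∧ 0 ≤ phat then max (ediv ((α : EReal) - s) p) (ediv ((α : EReal) - s) phat)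
  else if 0 < p ∧ phat < 0 then ediv ((α : EReal) - s) p
  else if 0 < phat ∧ p < 0 then ediv ((α : EReal) - s) phat
  else ⊥

/-- `Λ̲*_{p,q,p̂,q̂}(α,β)` (time sharing variable of size ≤ 4). -/
def LamLstar (P : Measure (X × Y)) (p q phat qhat α β : ℝ) : EReal :=
  ⨅ (w : Fin 4 → ℝ) (QX : Fin 4 → Measure X) (QY : Fin 4 → Measure Y)
    (_ : ∀ i, 0 ≤ w i) (_ : ∑ i, w i = 1)
    (_ : ∀ i, IsProbabilityMeasure (QX i)) (_ : ∀ i, QX i ≪ m1 P)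
    (_ : ∀ i, IsProbabilityMeasure (QY i)) (_ : ∀ i, QY i ≪ m2 P),
    (∑ i, (w i : EReal) * Dmin (QX i) (QY i) P)
      + eta p phat α (∑ i, (w i : EReal) * KL (QX i) (m1 P))
      + eta q qhat β (∑ i, (w i : EReal) * KL (QY i) (m2 P))

/-! ### Sub/supergradients (slopes in `[0,∞]`) -/

def IsSubgrad2 (F : ℝ → ℝ → EReal) (α β : ℝ) (u v : ℝ≥0∞) : Prop :=
  ∀ s t : ℝ, 0 ≤ s → 0 ≤ t →
    F α β + (u : EReal) * ((s - α : ℝ) : EReal) + (v : EReal) * ((t - β : ℝ) : EReal) ≤ F s t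

def IsSupergrad2 (F : ℝ → ℝ → EReal) (α β : ℝ) (u v : ℝ≥0∞) : Prop :=
  ∀ s t : ℝ, 0 ≤ s → 0 ≤ t →
    F s t ≤ F α β + (u : EReal) * ((s - α : ℝ) : EReal) + (v : EReal) * ((t - β : ℝ) : EReal)

def IsSubgrad1 (F : ℝ → EReal) (α : ℝ) (u : ℝ≥0∞) : Prop :=
  ∀ s : ℝ, 0 ≤ s → F α + (u : EReal) * ((s - α : ℝ) : EReal) ≤ F s

def IsSupergrad1 (F : ℝ → EReal) (α : ℝ) (u : ℝ≥0∞) : Prop :=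
  ∀ s : ℝ, 0 ≤ s → F s ≤ F α + (u : EReal) * ((s - α : ℝ) : EReal)

/-!
Write `p(A) = P_X^{⊗n}(A)` and let `N(A)` be the `q`-norm of `P_{X|Y}^{⊗n}(A | ·)`. Both are
computed by conditioning on the first letter `x`: `p(A)` is the `P_X`-mean of `p(Aₓ)`, and
Minkowski's inequality (the reverse one if `q < 1`) compares `N(A)` with the `q`-norm of the
conditional mean of `g(x) = N(Aₓ)`. The Gibbs variational principle for the logarithms of these
means yields a law `Q` on the first letter for which the pair `(-log p(A), -log N(A))` and the
`Q`-mean of the pairs of the sections `Aₓ` differ by a point `(s, v)` with `v` on the correct side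
of `φ_{q'}(s)`. For `q < 1` the law `Q` is the conditional law of the first letter given `A`; for
`q ≥ 1` it is the first marginal of the optimizer for `N`, whose density with respect to `P_{XY}`
is proportional to `g(x) 𝔼[g | y]^(q-1)`. By induction the pair divided by `n` is a convex
combination of points of the hypograph (resp. epigraph) of `φ_{q'}`, and Carathéodory's theorem
brings it down to three of them, as in the definition of the envelopes.

When `q < 1` the norm may vanish, so there `𝟙_A` is replaced by `𝟙_A + δ 𝟙_{Aᶜ}` and `δ → 0`.
-/

section Convexity

variable {E : Type*}

theorem exists_fin_convex_combination_of_mem_convexHull {𝕜 : Type*} [Field 𝕜] [LinearOrder 𝕜]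
    [IsStrictOrderedRing 𝕜] [AddCommGroup E] [Module 𝕜 E] [FiniteDimensional 𝕜 E]
    {n : ℕ} (hn : Module.finrank 𝕜 E < n) {K : Set E} {x : E} (hx : x ∈ convexHull 𝕜 K) :
    ∃ (w : Fin n → 𝕜) (z : Fin n → E), (∀ i, 0 ≤ w i) ∧ ∑ i, w i = 1 ∧ (∀ i, z i ∈ K) ∧
      ∑ i, w i • z i = x := by
  obtain ⟨ι, _, z, w, hz, hindep, hw, hw1, hwz⟩ := eq_pos_convex_span_of_mem_convexHull hx
  obtain ⟨x₀, hx₀⟩ : K.Nonempty := convexHull_nonempty_iff.1 ⟨x, hx⟩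
  have hcard : Fintype.card ι ≤ Fintype.card (Fin n) := by
    have := hindep.card_le_finrank_succ
    have := Submodule.finrank_le (vectorSpan 𝕜 (Set.range z))
    simp only [Fintype.card_fin]
    omega
  obtain ⟨e⟩ := Function.Embedding.nonempty_of_card_le hcard
  have hw_off (j) (hj : j ∉ Set.range e) : Function.extend e w 0 j = 0 :=
    Function.extend_apply' _ _ _ hj
  refine ⟨Function.extend e w 0, Function.extend e z fun _ => x₀, fun j => ?_, ?_, fun j => ?_, ?_⟩
  · by_cases hj : j ∈ Set.range e
    · obtain ⟨i, rfl⟩ := hj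
      exact (e.injective.extend_apply w 0 i).symm ▸ (hw i).le
    · exact (hw_off j hj).ge
  · rw [← hw1]
    exact (Fintype.sum_of_injective e e.injective _ _ hw_off fun i =>
      (e.injective.extend_apply w 0 i).symm).symm
  · by_cases hj : j ∈ Set.range e
    · obtain ⟨i, rfl⟩ := hj
      exact (e.injective.extend_apply z _ i).symm ▸ hz ⟨i, rfl⟩
    · exact (Function.extend_apply' z (fun _ => x₀) j hj).symm ▸ hx₀
  · rw [← hwz]
    refine (Fintype.sum_of_injective e e.injective _ _ (fun j hj => ?_) fun i => ?_).symm
    · rw [hw_off j hj, zero_smul]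
    · rw [e.injective.extend_apply, e.injective.extend_apply]

variable [NormedAddCommGroup E] [NormedSpace ℝ E] [FiniteDimensional ℝ E]

theorem exists_ne_zero_forall_mem_nonpos {C : Set E} (hC : Convex ℝ C) (hne : C.Nonempty)
    (h0 : (0 : E) ∉ C) : ∃ ℓ : StrongDual ℝ E, ℓ ≠ 0 ∧ ∀ a ∈ C, ℓ a ≤ 0 := by
  by_cases hspan : affineSpan ℝ C = ⊤
  · obtain ⟨ℓ, hℓ, hle⟩ := geometric_hahn_banach_of_nonempty_interior_point hC
      (fun h => h0 (interior_subset h)) (hC.interior_nonempty_iff_affineSpan_eq_top.2 hspan)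
    exact ⟨ℓ, hℓ, fun a ha => (hle a ha).trans_eq (map_zero ℓ)⟩
  · obtain ⟨c, hc⟩ := hne
    have hvec : vectorSpan ℝ C < ⊤ := by
      rwa [lt_top_iff_ne_top, ne_eq,
        ← AffineSubspace.affineSpan_eq_top_iff_vectorSpan_eq_top_of_nonempty ℝ E E ⟨c, hc⟩]
    obtain ⟨ℓ, hℓ, hker⟩ := Submodule.exists_le_ker_of_lt_top _ hvec
    have hconst (a) (ha : a ∈ C) : ℓ a = ℓ c := by
      rw [← sub_eq_zero, ← map_sub]
      exact hker (vsub_mem_vectorSpan ℝ ha hc)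
    have hℓ' : LinearMap.toContinuousLinearMap ℓ ≠ 0 := by simpa using hℓ
    rcases le_total (ℓ c) 0 with h | h
    · exact ⟨LinearMap.toContinuousLinearMap ℓ, hℓ', fun a ha => (hconst a ha).trans_le h⟩
    · exact ⟨-LinearMap.toContinuousLinearMap ℓ, neg_ne_zero.2 hℓ',
        fun a ha => neg_nonpos.2 (h.trans_eq (hconst a ha).symm)⟩

variable {Ω : Type*} [MeasurableSpace Ω] {μ : Measure Ω} [IsProbabilityMeasure μ] {f : Ω → E}

/- If `0 ∉ C`, a separating functional vanishes almost everywhere along `f`, so that `f` lives in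
its kernel, a space of smaller dimension. -/
theorem zero_mem_of_integral_eq_zero {C : Set E} (hC : Convex ℝ C) (hf : Integrable f μ)
    (hfC : ∀ᵐ x ∂μ, f x ∈ C) (hf0 : ∫ x, f x ∂μ = 0) : (0 : E) ∈ C := by
  induction hd : Module.finrank ℝ E using Nat.strong_induction_on generalizing E with
  | _ d ih =>
  by_contra h0
  obtain ⟨x₀, hx₀⟩ := hfC.exists
  obtain ⟨ℓ, hℓ, hle⟩ := exists_ne_zero_forall_mem_nonpos hC ⟨_, hx₀⟩ h0
  have hℓf : ∀ᵐ x ∂μ, ℓ (f x) = 0 := by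
    have hint : ∫ x, ℓ (f x) ∂μ = ∫ _, 0 ∂μ := by
      rw [ℓ.integral_comp_comm hf, hf0, map_zero, integral_zero]
    exact (integral_eq_iff_of_ae_le (ℓ.integrable_comp hf) (integrable_zero _ _ _)
      (hfC.mono fun x hx => hle _ hx)).1 hint
  let N := LinearMap.ker (ℓ : E →ₗ[ℝ] ℝ)
  obtain ⟨p, hp⟩ := N.subtype.exists_leftInverse_of_injective N.ker_subtype
  let p' := LinearMap.toContinuousLinearMap p
  have hpN (x : Ω) (hx : ℓ (f x) = 0) : ((p' (f x) : N) : E) = f x :=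
    congrArg Subtype.val (LinearMap.congr_fun hp ⟨f x, hx⟩)
  have hN : Module.finrank ℝ N < d := hd ▸ Submodule.finrank_lt fun h =>
    hℓ (ContinuousLinearMap.coe_injective (LinearMap.ker_eq_top.1 h))
  have hmem : (0 : N) ∈ N.subtype ⁻¹' C := by
    refine ih _ hN (f := fun x => p' (f x)) (hC.linear_preimage N.subtype)
      (p'.integrable_comp hf) ?_ ?_ rfl
    · filter_upwards [hfC, hℓf] with x hx hx0
      simpa only [Set.mem_preimage, Submodule.subtype_apply, hpN x hx0] using hx
    · rw [p'.integral_comp_comm hf, hf0, map_zero]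
  exact h0 hmem

theorem integral_mem_of_convex {C : Set E} (hC : Convex ℝ C) (hf : Integrable f μ)
    (hfC : ∀ᵐ x ∂μ, f x ∈ C) : ∫ x, f x ∂μ ∈ C := by
  have hmem := zero_mem_of_integral_eq_zero (f := fun x => -∫ x, f x ∂μ + f x)
    (hC.translate_preimage_right (∫ x, f x ∂μ)) ((integrable_const _).add hf)
    (hfC.mono fun x hx => by simpa using hx)
    (by rw [integral_add (integrable_const _) hf]; simp)
  simpa using hmem

end Convexity

section Envelopes

theorem exists_fin_three_convex_combination {K : Set (ℝ × ℝ)} {a v : ℝ}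
    (h : (a, v) ∈ convexHull ℝ K) :
    ∃ q x y : Fin 3 → ℝ, (∀ i, 0 ≤ q i) ∧ ∑ i, q i = 1 ∧ (∀ i, (x i, y i) ∈ K) ∧
      ∑ i, q i * x i = a ∧ ∑ i, q i * y i = v := by
  obtain ⟨q, z, hq, hq1, hz, hsum⟩ :=
    exists_fin_convex_combination_of_mem_convexHull (n := 3) (by simp) h
  refine ⟨q, fun i => (z i).1, fun i => (z i).2, hq, hq1, hz, ?_, ?_⟩
  · simpa [Prod.fst_sum] using congrArg Prod.fst hsum
  · simpa [Prod.snd_sum] using congrArg Prod.snd hsum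

theorem coe_sum_mul {ι : Type*} [Fintype ι] (q y : ι → ℝ) :
    ((∑ i, q i * y i : ℝ) : EReal) = ∑ i, (q i : EReal) * (y i : EReal) := by
  simp only [← EReal.coe_mul]
  exact map_sum (⟨⟨(↑), EReal.coe_zero⟩, EReal.coe_add⟩ : ℝ →+ EReal) _ _

/-- The hypograph of `F` over `[0, ∞)`. Only real heights occur, so `F` may take infinite
values. -/
def hypograph (F : ℝ → EReal) : Set (ℝ × ℝ) :=
  {z | 0 ≤ z.1 ∧ (z.2 : EReal) ≤ F z.1}

/-- The epigraph of `F` over `[0, ∞)`, closed under decreasing the abscissa: this is the epigraph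
of the increasing envelope `a ↦ ⨅ s ≥ a, F s` when the infimum is attained. -/
def leftEpigraph (F : ℝ → EReal) : Set (ℝ × ℝ) :=
  {z | ∃ s, z.1 ≤ s ∧ 0 ≤ s ∧ F s ≤ (z.2 : EReal)}

theorem le_uce1_of_mem_convexHull_hypograph {F : ℝ → EReal} {a v : ℝ}
    (h : (a, v) ∈ convexHull ℝ (hypograph F)) : (v : EReal) ≤ uce1 F a := by
  obtain ⟨q, x, y, hq, hq1, hxy, rfl, rfl⟩ := exists_fin_three_convex_combination h
  calc ((∑ i, q i * y i : ℝ) : EReal)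
      ≤ ∑ i, (q i : EReal) * F (x i) := by
        rw [coe_sum_mul]
        exact Finset.sum_le_sum fun i _ =>
          mul_le_mul_of_nonneg_left (hxy i).2 (EReal.coe_nonneg.2 (hq i))
    _ ≤ uce1 F (∑ i, q i * x i) :=
        le_iSup₂_of_le q x <| le_iSup₂_of_le hq hq1 <|
          le_iSup₂_of_le (fun i => (hxy i).1) rfl le_rfl

theorem iInf_lce1_le_of_mem_convexHull_leftEpigraph {F : ℝ → EReal} {a v : ℝ}
    (h : (a, v) ∈ convexHull ℝ (leftEpigraph F)) :
    ⨅ (s : ℝ) (_ : a ≤ s), lce1 F s ≤ (v : EReal) := by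
  obtain ⟨q, x, y, hq, hq1, hxy, rfl, rfl⟩ := exists_fin_three_convex_combination h
  choose s hxs hs hFs using hxy
  have ha : ∑ i, q i * x i ≤ ∑ i, q i * s i :=
    Finset.sum_le_sum fun i _ => mul_le_mul_of_nonneg_left (hxs i) (hq i)
  calc ⨅ (t : ℝ) (_ : ∑ i, q i * x i ≤ t), lce1 F t
      ≤ lce1 F (∑ i, q i * s i) := iInf₂_le _ ha
    _ ≤ ∑ i, (q i : EReal) * F (s i) :=
        iInf₂_le_of_le q s <| iInf₂_le_of_le hq hq1 <| iInf₂_le_of_le hs rfl le_rfl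
    _ ≤ ((∑ i, q i * y i : ℝ) : EReal) := by
        rw [coe_sum_mul]
        exact Finset.sum_le_sum fun i _ =>
          mul_le_mul_of_nonneg_left (hFs i) (EReal.coe_nonneg.2 (hq i))

end Envelopes

section Tensorization

variable {V : Type*} {n : ℕ}

/-- The section `{y | (x, y) ∈ A}` of a set of sequences at its first coordinate. -/
def sec (A : Set (Fin (n + 1) → V)) (x : V) : Set (Fin n → V) :=
  {y | Fin.cons x y ∈ A}

open scoped Pointwise in
theorem inv_smul_mem_convexHull_of_sections [MeasurableSpace V] {E : Type*}
    [NormedAddCommGroup E] [NormedSpace ℝ E] [FiniteDimensional ℝ E] {K : Set E}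
    {𝒜 : ∀ n, Set (Set (Fin n → V))} {Φ : ∀ n, Set (Fin n → V) → E}
    (hbase : ∀ A ∈ 𝒜 0, Φ 0 A = 0)
    (hstep : ∀ n, ∀ A ∈ 𝒜 (n + 1), ∃ Q : Measure V, IsProbabilityMeasure Q ∧
      (∀ᵐ x ∂Q, sec A x ∈ 𝒜 n) ∧ Integrable (fun x => Φ n (sec A x)) Q ∧
      Φ (n + 1) A - ∫ x, Φ n (sec A x) ∂Q ∈ K)
    (hn : n ≠ 0) {A : Set (Fin n → V)} (hA : A ∈ 𝒜 n) :
    (n : ℝ)⁻¹ • Φ n A ∈ convexHull ℝ K := by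
  have hK : K.Nonempty := by
    obtain ⟨m, rfl⟩ := Nat.exists_eq_succ_of_ne_zero hn
    obtain ⟨Q, _, _, _, hmem⟩ := hstep m A hA
    exact ⟨_, hmem⟩
  rw [← Set.mem_smul_set_iff_inv_smul_mem₀ (Nat.cast_ne_zero.2 hn)]
  clear hn
  induction n with
  | zero => simp [hbase A hA, Set.zero_smul_set hK.convexHull]
  | succ n ih =>
    obtain ⟨Q, _, hsec, hint, hmem⟩ := hstep n A hA
    have hmean : ∫ x, Φ n (sec A x) ∂Q ∈ (n : ℝ) • convexHull ℝ K :=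
      integral_mem_of_convex ((convex_convexHull ℝ K).smul _) hint (hsec.mono fun x hx => ih hx)
    rw [Nat.cast_succ, (convex_convexHull ℝ K).add_smul n.cast_nonneg zero_le_one, one_smul]
    exact ⟨_, hmean, _, subset_convexHull ℝ K hmem, add_sub_cancel _ _⟩

end Tensorization

section Surprisal

/-- The surprisal `-log x` of `x : ℝ≥0∞` as a real number, with junk value `0` at `0` and `⊤`. -/
def negLog (x : ℝ≥0∞) : ℝ :=
  -Real.log x.toReal

variable {x y : ℝ≥0∞}

@[simp]
theorem negLog_one : negLog 1 = 0 := by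
  simp [negLog]

theorem negLog_nonneg (hx : x ≤ 1) : 0 ≤ negLog x :=
  neg_nonneg.2 <| Real.log_nonpos ENNReal.toReal_nonneg <|
    ENNReal.toReal_le_of_le_ofReal zero_le_one (by simpa using hx)

theorem negLog_le_negLog (hx : x ≠ 0) (hy : y ≠ ⊤) (hxy : x ≤ y) : negLog y ≤ negLog x :=
  neg_le_neg <| Real.log_le_log (ENNReal.toReal_pos hx (ne_top_of_le_ne_top hy hxy))
    (ENNReal.toReal_mono hy hxy)

theorem negLog_mul (hx : x ≠ 0) (hx' : x ≠ ⊤) (hy : y ≠ 0) (hy' : y ≠ ⊤) :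
    negLog (x * y) = negLog x + negLog y := by
  rw [negLog, ENNReal.toReal_mul, Real.log_mul (ENNReal.toReal_pos hx hx').ne'
    (ENNReal.toReal_pos hy hy').ne', neg_add, negLog, negLog]

theorem negLog_div (hx : x ≠ 0) (hx' : x ≠ ⊤) (hy : y ≠ 0) (hy' : y ≠ ⊤) :
    negLog (x / y) = negLog x - negLog y := by
  rw [negLog, ENNReal.toReal_div, Real.log_div (ENNReal.toReal_pos hx hx').ne'
    (ENNReal.toReal_pos hy hy').ne', neg_sub', negLog, negLog]

theorem negLog_rpow (x : ℝ≥0∞) (q : ℝ) : negLog (x ^ q) = q * negLog x := by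
  rcases eq_or_ne x 0 with rfl | hx
  · rcases lt_trichotomy q 0 with hq | rfl | hq
    · simp [negLog, ENNReal.zero_rpow_of_neg hq]
    · simp
    · simp [negLog, ENNReal.zero_rpow_of_pos hq]
  rcases eq_or_ne x ⊤ with rfl | hx'
  · rcases lt_trichotomy q 0 with hq | rfl | hq
    · simp [negLog, ENNReal.top_rpow_of_neg hq]
    · simp
    · simp [negLog, ENNReal.top_rpow_of_pos hq]
  · rw [negLog, ← ENNReal.toReal_rpow, Real.log_rpow (ENNReal.toReal_pos hx hx'), negLog]
    ring

theorem one_sub_toReal_le_negLog (hx : x ≠ 0) (hx' : x ≠ ⊤) : 1 - x.toReal ≤ negLog x := by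
  have := Real.log_le_sub_one_of_pos (ENNReal.toReal_pos hx hx')
  rw [negLog]
  linarith

theorem measurable_negLog : Measurable negLog :=
  (Real.measurable_log.comp ENNReal.measurable_toReal).neg

theorem integrable_negLog {Q : Measure X} [IsFiniteMeasure Q] {f : X → ℝ≥0∞} (hf : Measurable f)
    {δ : ℝ≥0∞} (hδ : δ ≠ 0) (hδf : ∀ᵐ x ∂Q, δ ≤ f x) (hf1 : ∀ᵐ x ∂Q, f x ≤ 1) :
    Integrable (fun x => negLog (f x)) Q := by
  refine Integrable.of_bound (measurable_negLog.comp hf).aestronglyMeasurable (negLog δ) ?_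
  filter_upwards [hδf, hf1] with x h h'
  rw [Real.norm_eq_abs, abs_of_nonneg (negLog_nonneg h')]
  exact negLog_le_negLog hδ (ne_top_of_le_ne_top ENNReal.one_ne_top h') h

theorem negLog_enorm (P : Measure X) (F : X → ℝ≥0∞) (q : ℝ) :
    negLog (enorm P F q) = 1 / q * negLog (∫⁻ x, F x ^ q ∂P) :=
  negLog_rpow _ _

theorem lintegral_ne_zero_of_ae_ne_zero {Q : Measure X} [NeZero Q] {u : X → ℝ≥0∞}
    (hu : Measurable u) (hu0 : ∀ᵐ x ∂Q, u x ≠ 0) : ∫⁻ x, u x ∂Q ≠ 0 := fun h => by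
  obtain ⟨x, hx, hx0⟩ := (((lintegral_eq_zero_iff hu).1 h).and hu0).exists
  exact hx0 hx

/- Jensen's inequality, by integrating `1 - u / c ≤ -log (u / c)` with `c = ∫⁻ u`. -/
theorem negLog_lintegral_le_integral {Q : Measure X} [IsProbabilityMeasure Q] {u : X → ℝ≥0∞}
    (hu : Measurable u) (hu0 : ∀ᵐ x ∂Q, u x ≠ 0) (hu_top : ∫⁻ x, u x ∂Q ≠ ⊤)
    (hint : Integrable (fun x => negLog (u x)) Q) :
    negLog (∫⁻ x, u x ∂Q) ≤ ∫ x, negLog (u x) ∂Q := by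
  set c := ∫⁻ x, u x ∂Q
  have hc0 : c ≠ 0 := lintegral_ne_zero_of_ae_ne_zero hu hu0
  have hmass : ∫⁻ x, u x / c ∂Q = 1 := by
    simp only [div_eq_mul_inv]
    rw [lintegral_mul_const _ hu, ENNReal.mul_inv_cancel hc0 hu_top]
  have hmass_top : ∫⁻ x, u x / c ∂Q ≠ ⊤ := hmass ▸ ENNReal.one_ne_top
  have hum : Measurable fun x => u x / c := hu.div_const c
  have hui : Integrable (fun x => (u x / c).toReal) Q :=
    integrable_toReal_of_lintegral_ne_top hum.aemeasurable hmass_top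
  have hmean : ∫ x, (1 - (u x / c).toReal) ∂Q ≤ ∫ x, (negLog (u x) - negLog c) ∂Q := by
    refine integral_mono_ae ((integrable_const _).sub hui) (hint.sub (integrable_const _)) ?_
    filter_upwards [hu0, ae_lt_top hu hu_top] with x h0 ht
    exact negLog_div h0 ht.ne hc0 hu_top ▸ one_sub_toReal_le_negLog
      (ENNReal.div_pos h0 hu_top).ne' (ENNReal.div_ne_top ht.ne hc0)
  rw [integral_sub (integrable_const _) hui, integral_sub hint (integrable_const _),
    integral_toReal hum.aemeasurable (ae_lt_top hum hmass_top), hmass] at hmean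
  simpa using hmean

end Surprisal

section Divergence

variable {P Q : Measure X} {d : ℝ}

theorem KL_eq_coe_iff :
    KL Q P = (d : EReal) ↔ Q ≪ P ∧ Integrable (fun x => negLog (Q.rnDeriv P x)) Q ∧
      -∫ x, negLog (Q.rnDeriv P x) ∂Q = d := by
  have hint : Integrable (fun x => negLog (Q.rnDeriv P x)) Q ↔
      Integrable (fun x => Real.log (Q.rnDeriv P x).toReal) Q := integrable_neg_iff
  rw [hint, KL]
  split_ifs with h
  · rw [EReal.coe_eq_coe_iff, ← integral_neg]
    simp only [negLog, neg_neg, h.1, h.2, true_and]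
  · exact iff_of_false (EReal.coe_ne_top d).symm fun h' => h ⟨h'.1, h'.2.1⟩

theorem KL_eq_top_or_coe (Q P : Measure X) : KL Q P = ⊤ ∨ ∃ d : ℝ, KL Q P = d := by
  unfold KL
  split_ifs
  exacts [Or.inr ⟨_, rfl⟩, Or.inl rfl]

theorem absolutelyContinuous_of_KL_eq_coe (h : KL Q P = d) : Q ≪ P :=
  (KL_eq_coe_iff.1 h).1

theorem lintegral_div_rnDeriv_le [SigmaFinite P] [SigmaFinite Q] (hQP : Q ≪ P) {f : X → ℝ≥0∞}
    (hf : Measurable f) : ∫⁻ x, f x / Q.rnDeriv P x ∂Q ≤ ∫⁻ x, f x ∂P :=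
  calc ∫⁻ x, f x / Q.rnDeriv P x ∂Q
      = ∫⁻ x, Q.rnDeriv P x * (f x / Q.rnDeriv P x) ∂P :=
        (lintegral_rnDeriv_mul hQP (hf.div (Measure.measurable_rnDeriv Q P)).aemeasurable).symm
    _ ≤ ∫⁻ x, f x ∂P := lintegral_mono fun _ => ENNReal.mul_div_le

theorem negLog_lintegral_le [IsProbabilityMeasure Q] [SigmaFinite P] (hKL : KL Q P = d)
    {f : X → ℝ≥0∞} (hf : Measurable f) (hf0 : ∀ᵐ x ∂Q, f x ≠ 0) (hfP : ∫⁻ x, f x ∂P ≠ ⊤)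
    (hint : Integrable (fun x => negLog (f x)) Q) :
    negLog (∫⁻ x, f x ∂P) ≤ d + ∫ x, negLog (f x) ∂Q := by
  obtain ⟨hac, hllr, rfl⟩ := KL_eq_coe_iff.1 hKL
  let u x := f x / Q.rnDeriv P x
  have hum : Measurable u := hf.div (Measure.measurable_rnDeriv Q P)
  have hu_le : ∫⁻ x, u x ∂Q ≤ ∫⁻ x, f x ∂P := lintegral_div_rnDeriv_le hac hf
  have hfin : ∀ᵐ x ∂Q, f x ≠ ⊤ ∧ Q.rnDeriv P x ≠ 0 ∧ Q.rnDeriv P x ≠ ⊤ := by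
    filter_upwards [hac.ae_le (ae_lt_top hf hfP), Measure.rnDeriv_pos hac,
      hac.ae_le (Measure.rnDeriv_lt_top Q P)] with x h1 h2 h3
    exact ⟨h1.ne, h2.ne', h3.ne⟩
  have hu0 : ∀ᵐ x ∂Q, u x ≠ 0 := by
    filter_upwards [hf0, hfin] with x h0 hx
    exact (ENNReal.div_pos h0 hx.2.2).ne'
  have hlog : (fun x => negLog (u x)) =ᵐ[Q] fun x => negLog (f x) - negLog (Q.rnDeriv P x) := by
    filter_upwards [hf0, hfin] with x h0 ⟨ht, hρ0, hρt⟩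
    exact negLog_div h0 ht hρ0 hρt
  calc negLog (∫⁻ x, f x ∂P)
      ≤ negLog (∫⁻ x, u x ∂Q) :=
        negLog_le_negLog (lintegral_ne_zero_of_ae_ne_zero hum hu0) hfP hu_le
    _ ≤ ∫ x, negLog (u x) ∂Q :=
        negLog_lintegral_le_integral hum hu0 (ne_top_of_le_ne_top hfP hu_le)
          ((hint.sub hllr).congr hlog.symm)
    _ = -∫ x, negLog (Q.rnDeriv P x) ∂Q + ∫ x, negLog (f x) ∂Q := by
        rw [integral_congr_ae hlog, integral_sub hint hllr]
        ring

theorem KL_nonneg [IsProbabilityMeasure Q] [IsProbabilityMeasure P] (hKL : KL Q P = d) :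
    0 ≤ d := by
  simpa using negLog_lintegral_le hKL (f := 1) measurable_const (by simp) (by simp) (by simp)

end Divergence

section Reweighting

/-- The measure with density proportional to `f` with respect to `P`, normalized to be a
probability measure. It is the measure at which the Donsker–Varadhan inequality is an equality. -/
def reweighted (P : Measure X) (f : X → ℝ≥0∞) : Measure X :=
  P.withDensity fun x => f x / ∫⁻ x', f x' ∂P

variable {P Q : Measure X} {f : X → ℝ≥0∞}

theorem reweighted_absolutelyContinuous (P : Measure X) (f : X → ℝ≥0∞) : reweighted P f ≪ P :=
  withDensity_absolutelyContinuous _ _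

theorem isProbabilityMeasure_reweighted (hf : Measurable f) (h0 : ∫⁻ x, f x ∂P ≠ 0)
    (ht : ∫⁻ x, f x ∂P ≠ ⊤) : IsProbabilityMeasure (reweighted P f) := by
  refine ⟨?_⟩
  rw [reweighted, withDensity_apply _ MeasurableSet.univ, Measure.restrict_univ]
  simp only [div_eq_mul_inv]
  rw [lintegral_mul_const _ hf, ENNReal.mul_inv_cancel h0 ht]

theorem ae_reweighted_ne_zero (hf : Measurable f) : ∀ᵐ x ∂reweighted P f, f x ≠ 0 := by
  rw [reweighted, ae_withDensity_iff (hf.div_const _)]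
  exact Eventually.of_forall fun x hx h0 => hx (by rw [h0, ENNReal.zero_div])

theorem integrable_negLog_reweighted [IsFiniteMeasure P] (hf : Measurable f)
    (h0 : ∫⁻ x, f x ∂P ≠ 0) {B : ℝ≥0∞} (hB : B ≠ ⊤) (hfB : ∀ᵐ x ∂P, f x ≤ B) :
    Integrable (fun x => negLog (f x)) (reweighted P f) := by
  have hdens : ∀ᵐ x ∂P, f x / ∫⁻ x', f x' ∂P < ⊤ :=
    hfB.mono fun x hx => (ENNReal.div_lt_top (ne_top_of_le_ne_top hB hx) h0)
  obtain ⟨C, hC⟩ := isCompact_Icc.exists_bound_of_continuousOn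
    (Real.continuous_mul_log.continuousOn (s := Set.Icc 0 B.toReal))
  rw [reweighted, integrable_withDensity_iff_integrable_smul' (hf.div_const _) hdens]
  refine Integrable.of_bound (C := C / (∫⁻ x, f x ∂P).toReal)
    ((hf.div_const _).ennreal_toReal.smul (measurable_negLog.comp hf)).aestronglyMeasurable ?_
  filter_upwards [hfB] with x hx
  have hxC := hC (f x).toReal ⟨ENNReal.toReal_nonneg, ENNReal.toReal_mono hB hx⟩
  calc ‖(f x / ∫⁻ x', f x' ∂P).toReal • negLog (f x)‖
      = ‖(f x).toReal * Real.log (f x).toReal‖ / (∫⁻ x', f x' ∂P).toReal := by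
        rw [ENNReal.toReal_div, smul_eq_mul, negLog, mul_neg, norm_neg, div_mul_eq_mul_div,
          norm_div, Real.norm_of_nonneg (ENNReal.toReal_nonneg (a := ∫⁻ x', f x' ∂P))]
    _ ≤ C / (∫⁻ x', f x' ∂P).toReal := by gcongr

theorem KL_reweighted [IsFiniteMeasure P] (hf : Measurable f) (h0 : ∫⁻ x, f x ∂P ≠ 0)
    {B : ℝ≥0∞} (hB : B ≠ ⊤) (hfB : ∀ᵐ x ∂P, f x ≤ B) (ht : ∫⁻ x, f x ∂P ≠ ⊤) :
    KL (reweighted P f) P =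
      ((negLog (∫⁻ x, f x ∂P) - ∫ x, negLog (f x) ∂reweighted P f : ℝ) : EReal) := by
  have := isProbabilityMeasure_reweighted hf h0 ht
  have hac := reweighted_absolutelyContinuous P f
  have hint := integrable_negLog_reweighted hf h0 hB hfB
  have hlog : (fun x => negLog ((reweighted P f).rnDeriv P x)) =ᵐ[reweighted P f]
      fun x => negLog (f x) - negLog (∫⁻ x, f x ∂P) := by
    filter_upwards [hac.ae_le (Measure.rnDeriv_withDensity P (hf.div_const _)),
      hac.ae_le hfB, ae_reweighted_ne_zero hf] with x hx hxB hx0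
    rw [reweighted, hx, negLog_div hx0 (ne_top_of_le_ne_top hB hxB) h0 ht]
  rw [KL_eq_coe_iff]
  refine ⟨hac, (hint.sub (integrable_const _)).congr hlog.symm, ?_⟩
  rw [integral_congr_ae hlog, integral_sub hint (integrable_const _)]
  simp

theorem exists_KL_eq_coe_of_le_smul [IsFiniteMeasure P] [IsProbabilityMeasure Q] {C : ℝ≥0∞}
    (hC : C ≠ ⊤) (h : Q ≤ C • P) : ∃ d : ℝ, KL Q P = d := by
  have hac : Q ≪ P := (Measure.absolutelyContinuous_of_le h).trans
    (Measure.smul_absolutelyContinuous)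
  have hmass : ∫⁻ x, Q.rnDeriv P x ∂P = 1 := by
    rw [Measure.lintegral_rnDeriv hac, measure_univ]
  have hle : ∀ᵐ x ∂P, Q.rnDeriv P x ≤ C := by
    refine ae_le_of_forall_setLIntegral_le_of_sigmaFinite (Measure.measurable_rnDeriv Q P)
      fun s _ _ => ?_
    calc ∫⁻ x in s, Q.rnDeriv P x ∂P ≤ Q s := Measure.setLIntegral_rnDeriv_le s
      _ ≤ C * P s := h s
      _ = ∫⁻ _ in s, C ∂P := (setLIntegral_const s C).symm
  have hQ : reweighted P (Q.rnDeriv P) = Q := by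
    simp only [reweighted, hmass, div_one, Measure.withDensity_rnDeriv_eq Q P hac]
  rw [← hQ, KL_reweighted (Measure.measurable_rnDeriv Q P) (by simp [hmass]) hC hle
    (by simp [hmass])]
  exact ⟨_, rfl⟩

end Reweighting

section ConditionalKernel

/-- The conditional expectation `y ↦ 𝔼[g(X) | Y = y]` of `g` under the kernel `κ`. -/
def kernelMean (κ : Kernel Y X) (g : X → ℝ≥0∞) (y : Y) : ℝ≥0∞ :=
  ∫⁻ x, g x ∂κ y

theorem measurable_kernelMean (κ : Kernel Y X) {g : X → ℝ≥0∞} (hg : Measurable g) :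
    Measurable (kernelMean κ g) :=
  hg.lintegral_kernel

theorem le_kernelMean (κ : Kernel Y X) [IsMarkovKernel κ] {g : X → ℝ≥0∞} {c : ℝ≥0∞}
    (h : ∀ x, c ≤ g x) (y : Y) : c ≤ kernelMean κ g y :=
  calc c = ∫⁻ _, c ∂κ y := by simp
    _ ≤ kernelMean κ g y := lintegral_mono h

theorem kernelMean_le (κ : Kernel Y X) [IsMarkovKernel κ] {g : X → ℝ≥0∞} {c : ℝ≥0∞}
    (h : ∀ x, g x ≤ c) (y : Y) : kernelMean κ g y ≤ c :=
  calc kernelMean κ g y ≤ ∫⁻ _, c ∂κ y := lintegral_mono h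
    _ = c := by simp

variable {P : Measure (X × Y)} [IsProbabilityMeasure P] {κ : Kernel Y X}

instance : IsProbabilityMeasure (m1 P) :=
  Measure.isProbabilityMeasure_map measurable_fst.aemeasurable

instance : IsProbabilityMeasure (m2 P) :=
  Measure.isProbabilityMeasure_map measurable_snd.aemeasurable

variable [IsMarkovKernel κ]

theorem map_swap_compProd_eq (hκ : IsCondKernel P κ) : (m2 P ⊗ₘ κ).map Prod.swap = P := by
  have := Measure.isProbabilityMeasure_map (μ := m2 P ⊗ₘ κ) measurable_swap.aemeasurable
  refine Measure.ext_prod fun {s t} hs ht => ?_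
  rw [Measure.map_apply measurable_swap (hs.prod ht), Set.preimage_swap_prod,
    Measure.compProd_apply_prod ht hs, hκ s t hs ht]

theorem lintegral_eq_lintegral_lintegral_kernel (hκ : IsCondKernel P κ) {f : X × Y → ℝ≥0∞}
    (hf : Measurable f) : ∫⁻ z, f z ∂P = ∫⁻ y, ∫⁻ x, f (x, y) ∂κ y ∂m2 P := by
  conv_lhs => rw [← map_swap_compProd_eq hκ]
  rw [lintegral_map hf measurable_swap, Measure.lintegral_compProd (by fun_prop)]
  rfl

theorem lintegral_fst_mul_snd (hκ : IsCondKernel P κ) {g : X → ℝ≥0∞} {h : Y → ℝ≥0∞}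
    (hg : Measurable g) (hh : Measurable h) :
    ∫⁻ z, g z.1 * h z.2 ∂P = ∫⁻ y, kernelMean κ g y * h y ∂m2 P := by
  rw [lintegral_eq_lintegral_lintegral_kernel hκ (by fun_prop)]
  exact lintegral_congr fun y => lintegral_mul_const (h y) hg

theorem lintegral_m1 (hκ : IsCondKernel P κ) {g : X → ℝ≥0∞} (hg : Measurable g) :
    ∫⁻ x, g x ∂m1 P = ∫⁻ y, kernelMean κ g y ∂m2 P := by
  rw [m1, lintegral_map hg measurable_fst]
  simpa using lintegral_fst_mul_snd hκ hg (measurable_const (a := (1 : ℝ≥0∞)))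

end ConditionalKernel

section SingleLetter

variable {P : Measure (X × Y)} [IsProbabilityMeasure P] {κ : Kernel Y X} [IsMarkovKernel κ]
  {g : X → ℝ≥0∞} {δ : ℝ≥0∞} {q d s t : ℝ} {QX : Measure X} {QY : Measure Y}

theorem integral_negLog_comp {Ω : Type*} [MeasurableSpace Ω] {μ : Measure Ω} {ν : Measure X}
    {φ : Ω → X} (hφ : MeasurePreserving φ μ ν) (hg : Measurable g) :
    ∫ ω, negLog (g (φ ω)) ∂μ = ∫ x, negLog (g x) ∂ν := by
  have hm : Measurable fun x => negLog (g x) := measurable_negLog.comp hg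
  rw [← hφ.map_eq, integral_map hφ.measurable.aemeasurable hm.aestronglyMeasurable]

theorem negLog_lintegral_kernelMean_mul_le (hκ : IsCondKernel P κ) (hg : Measurable g)
    (hg0 : ∀ᵐ x ∂QX, g x ≠ 0 ∧ g x ≠ ⊤) (hg_int : Integrable (fun x => negLog (g x)) QX)
    {h : Y → ℝ≥0∞} (hh : Measurable h) (hh0 : ∀ᵐ y ∂QY, h y ≠ 0 ∧ h y ≠ ⊤)
    (hh_int : Integrable (fun y => negLog (h y)) QY)
    (hgh : ∫⁻ y, kernelMean κ g y * h y ∂m2 P ≠ ⊤)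
    {π : Measure (X × Y)} (hπ : π ∈ couplings QX QY) (hd : KL π P = d) :
    negLog (∫⁻ y, kernelMean κ g y * h y ∂m2 P) ≤
      d + (∫ x, negLog (g x) ∂QX + ∫ y, negLog (h y) ∂QY) := by
  obtain ⟨hπp, hπ1, hπ2⟩ := hπ
  have hfst : MeasurePreserving Prod.fst π QX := ⟨measurable_fst, hπ1⟩
  have hsnd : MeasurePreserving Prod.snd π QY := ⟨measurable_snd, hπ2⟩
  have hne : ∀ᵐ z ∂π, (g z.1 ≠ 0 ∧ g z.1 ≠ ⊤) ∧ h z.2 ≠ 0 ∧ h z.2 ≠ ⊤ :=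
    (hfst.quasiMeasurePreserving.ae hg0).and (hsnd.quasiMeasurePreserving.ae hh0)
  have hg_int' : Integrable (fun z : X × Y => negLog (g z.1)) π :=
    hfst.integrable_comp_of_integrable hg_int
  have hh_int' : Integrable (fun z : X × Y => negLog (h z.2)) π :=
    hsnd.integrable_comp_of_integrable hh_int
  have hlog : (fun z : X × Y => negLog (g z.1 * h z.2)) =ᵐ[π]
      fun z => negLog (g z.1) + negLog (h z.2) :=
    hne.mono fun z hz => negLog_mul hz.1.1 hz.1.2 hz.2.1 hz.2.2
  rw [← integral_negLog_comp hfst hg, ← integral_negLog_comp hsnd hh,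
    ← integral_add hg_int' hh_int', ← integral_congr_ae hlog, ← lintegral_fst_mul_snd hκ hg hh]
  exact negLog_lintegral_le hd (by fun_prop) (hne.mono fun z hz => mul_ne_zero hz.1.1 hz.2.1)
    (by rwa [lintegral_fst_mul_snd hκ hg hh]) ((hg_int'.add hh_int').congr hlog.symm)

/- Test `π` against `P` on `g x * (dQY/dP_Y)(y) / 𝔼[g(X) | Y = y]`, which integrates to one. -/
theorem add_integral_negLog_kernelMean_le (hκ : IsCondKernel P κ) (hg : Measurable g)
    (hδ : δ ≠ 0) (hδg : ∀ x, δ ≤ g x) (hg1 : ∀ x, g x ≤ 1)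
    [IsProbabilityMeasure QX] [IsProbabilityMeasure QY] {π : Measure (X × Y)}
    (hπ : π ∈ couplings QX QY) (hd : KL π P = d) (ht : KL QY (m2 P) = t) :
    t + ∫ y, negLog (kernelMean κ g y) ∂QY ≤ d + ∫ x, negLog (g x) ∂QX := by
  obtain ⟨hac, hρ_int, rfl⟩ := KL_eq_coe_iff.1 ht
  set ρ := QY.rnDeriv (m2 P)
  set F := kernelMean κ g
  have hne : ∀ {a : ℝ≥0∞}, δ ≤ a → a ≤ 1 → a ≠ 0 ∧ a ≠ ⊤ := fun h h' =>
    ⟨(hδ.bot_lt.trans_le h).ne', ne_top_of_le_ne_top ENNReal.one_ne_top h'⟩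
  have hρm : Measurable ρ := Measure.measurable_rnDeriv _ _
  have hFm : Measurable F := measurable_kernelMean κ hg
  have hδF : ∀ y, δ ≤ F y := le_kernelMean κ hδg
  have hF1 : ∀ y, F y ≤ 1 := kernelMean_le κ hg1
  have hF0 : ∀ y, F y ≠ 0 ∧ F y ≠ ⊤ := fun y => hne (hδF y) (hF1 y)
  have hρ0 : ∀ᵐ y ∂QY, ρ y ≠ 0 ∧ ρ y ≠ ⊤ := by
    filter_upwards [Measure.rnDeriv_pos hac, hac.ae_le (Measure.rnDeriv_lt_top QY (m2 P))]
      with y h h'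
    exact ⟨h.ne', h'.ne⟩
  have hF_int : Integrable (fun y => negLog (F y)) QY :=
    integrable_negLog hFm hδ (by simp [hδF]) (by simp [hF1])
  have hlog : (fun y => negLog (ρ y / F y)) =ᵐ[QY] fun y => negLog (ρ y) - negLog (F y) :=
    hρ0.mono fun y hy => negLog_div hy.1 hy.2 (hF0 y).1 (hF0 y).2
  have hmass : ∫⁻ y, F y * (ρ y / F y) ∂m2 P = 1 := by
    rw [← measure_univ (μ := QY), ← Measure.lintegral_rnDeriv hac]
    exact lintegral_congr fun y => ENNReal.mul_div_cancel (hF0 y).1 (hF0 y).2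
  have htest := negLog_lintegral_kernelMean_mul_le (h := fun y => ρ y / F y) hκ hg
    (Eventually.of_forall fun x => hne (hδg x) (hg1 x))
    (integrable_negLog hg hδ (by simp [hδg]) (by simp [hg1])) (hρm.div hFm)
    (hρ0.mono fun y hy => ⟨(ENNReal.div_pos hy.1 (hF0 y).2).ne', ENNReal.div_ne_top hy.2 (hF0 y).1⟩)
    ((hρ_int.sub hF_int).congr hlog.symm) (hmass ▸ ENNReal.one_ne_top) hπ hd
  rw [hmass, negLog_one, integral_congr_ae hlog, integral_sub hρ_int hF_int] at htest
  linarith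

end SingleLetter

section GibbsVariational

variable {P Q : Measure X} [IsProbabilityMeasure P] {F : X → ℝ≥0∞} {q t : ℝ}

theorem negLog_enorm_le [IsProbabilityMeasure Q] (hq : 0 < q) (ht : KL Q P = t)
    (hF : Measurable F) (hF0 : ∀ᵐ x ∂Q, F x ≠ 0) (hFP : ∫⁻ x, F x ^ q ∂P ≠ ⊤)
    (hint : Integrable (fun x => negLog (F x)) Q) :
    negLog (enorm P F q) ≤ t / q + ∫ x, negLog (F x) ∂Q := by
  have hDV := negLog_lintegral_le ht (hF.pow_const q)
    (hF0.mono fun x hx h => hx ((ENNReal.rpow_eq_zero_iff_of_pos hq).1 h)) hFP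
    (by simpa only [negLog_rpow] using hint.const_mul q)
  simp only [negLog_rpow, integral_const_mul] at hDV
  rw [negLog_enorm, div_add' _ _ _ hq.ne', one_div_mul_eq_div]
  gcongr
  linarith

theorem ennreal_rpow_le_rpow_of_neg {a b : ℝ≥0∞} (hq : q < 0) (hab : a ≤ b) : b ^ q ≤ a ^ q := by
  rw [← neg_neg q, ENNReal.rpow_neg, ENNReal.rpow_neg a]
  exact ENNReal.inv_le_inv.2 (ENNReal.rpow_le_rpow hab (by linarith))

theorem exists_negLog_enorm_eq (hF : Measurable F) {δ : ℝ≥0∞} (hδ : δ ≠ 0) (hδF : ∀ x, δ ≤ F x)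
    (hF1 : ∀ x, F x ≤ 1) (hq : q < 0) :
    ∃ (Q : Measure X) (t : ℝ), IsProbabilityMeasure Q ∧ KL Q P = t ∧
      negLog (enorm P F q) = t / q + ∫ x, negLog (F x) ∂Q := by
  have hFq : Measurable fun x => F x ^ q := hF.pow_const q
  have hFq_le : ∀ᵐ x ∂P, F x ^ q ≤ δ ^ q :=
    Eventually.of_forall fun x => ennreal_rpow_le_rpow_of_neg hq (hδF x)
  have hB : δ ^ q ≠ ⊤ := by simp [ENNReal.rpow_eq_top_iff, hδ, hq.not_gt]
  have hZ0 : ∫⁻ x, F x ^ q ∂P ≠ 0 :=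
    lintegral_ne_zero_of_ae_ne_zero hFq <| Eventually.of_forall fun x =>
      (ENNReal.rpow_pos (hδ.bot_lt.trans_le (hδF x))
        (ne_top_of_le_ne_top ENNReal.one_ne_top (hF1 x))).ne'
  have hZ_top : ∫⁻ x, F x ^ q ∂P ≠ ⊤ :=
    ne_top_of_le_ne_top hB ((lintegral_mono_ae hFq_le).trans (by simp))
  refine ⟨_, _, isProbabilityMeasure_reweighted hFq hZ0 hZ_top,
    KL_reweighted hFq hZ0 hB hFq_le hZ_top, ?_⟩
  simp only [negLog_rpow, integral_const_mul]
  rw [negLog_enorm]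
  field [hq.ne]

end GibbsVariational

section SingleLetterUpper

theorem divE_coe (t r : ℝ) : divE t (r : EReal) = ((t / r : ℝ) : EReal) := by
  simp [divE]

theorem ediv_coe (t : ℝ) {r : ℝ} (hr : r ≠ 0) : ediv (t : EReal) r = ((t / r : ℝ) : EReal) := by
  rw [ediv, if_neg hr, ← EReal.coe_mul, div_eq_mul_inv]

theorem ediv_top_of_neg {r : ℝ} (hr : r < 0) : ediv ⊤ r = ⊥ := by
  rw [ediv, if_neg hr.ne, EReal.top_mul_coe_of_neg (inv_lt_zero.2 hr)]

theorem div_div_sub_one {q : ℝ} (hq0 : q ≠ 0) (hq1 : q ≠ 1) (t : ℝ) :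
    t / (q / (q - 1)) = t - t / q := by
  have := sub_ne_zero.2 hq1
  field_simp

variable {P : Measure (X × Y)} [IsProbabilityMeasure P] {κ : Kernel Y X} [IsMarkovKernel κ]
  {g : X → ℝ≥0∞} {δ : ℝ≥0∞} {q s t : ℝ} {QX : Measure X} {QY : Measure Y}

theorem Dmin_nonneg (QX : Measure X) (QY : Measure Y) (P : Measure (X × Y))
    [IsProbabilityMeasure P] : 0 ≤ Dmin QX QY P := by
  refine le_iInf₂ fun π hπ => ?_
  have := hπ.1
  rcases KL_eq_top_or_coe π P with h | ⟨d, h⟩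
  · exact h ▸ le_top
  · exact h ▸ EReal.coe_nonneg.2 (KL_nonneg h)

theorem coe_sub_le_Dmin_sub (hκ : IsCondKernel P κ) (hg : Measurable g)
    (hδ : δ ≠ 0) (hδg : ∀ x, δ ≤ g x) (hg1 : ∀ x, g x ≤ 1)
    [IsProbabilityMeasure QX] [IsProbabilityMeasure QY] (ht : KL QY (m2 P) = t) {c e : ℝ}
    (hc : c ≤ t - e + ∫ y, negLog (kernelMean κ g y) ∂QY) :
    ((c - ∫ x, negLog (g x) ∂QX : ℝ) : EReal) ≤ Dmin QX QY P - (e : EReal) := by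
  refine (EReal.le_sub_iff_add_le (Or.inl (EReal.coe_ne_bot _))
    (Or.inl (EReal.coe_ne_top _))).2 (le_iInf₂ fun π hπ => ?_)
  rcases KL_eq_top_or_coe π P with hd | ⟨d, hd⟩
  · exact hd ▸ le_top
  · have := add_integral_negLog_kernelMean_le hκ hg hδ hδg hg1 hπ hd ht
    rw [hd, ← EReal.coe_add, EReal.coe_le_coe_iff]
    linarith

theorem coe_sub_le_phiSupR (hκ : IsCondKernel P κ) (hg : Measurable g)
    (hδ : δ ≠ 0) (hδg : ∀ x, δ ≤ g x) (hg1 : ∀ x, g x ≤ 1) (hq : q < 0)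
    [IsProbabilityMeasure QX] (hs : KL QX (m1 P) = s) :
    ((negLog (enorm (m2 P) (kernelMean κ g) q) - ∫ x, negLog (g x) ∂QX : ℝ) : EReal) ≤
      phiSupR P (q / (q - 1)) s := by
  obtain ⟨QY, t, hQY, ht, hnorm⟩ := exists_negLog_enorm_eq (P := m2 P)
    (measurable_kernelMean κ hg) hδ (le_kernelMean κ hδg) (kernelMean_le κ hg1) hq
  refine le_iSup₂_of_le t (KL_nonneg ht) ?_
  rw [divE_coe, div_div_sub_one hq.ne (by linarith)]
  refine (coe_sub_le_Dmin_sub hκ hg hδ hδg hg1 ht ?_).trans (EReal.sub_le_sub ?_ le_rfl)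
  · linarith
  · exact le_iSup_of_le QX <| le_iSup_of_le QY <| le_iSup_of_le inferInstance <|
      le_iSup_of_le hQY <| le_iSup_of_le (absolutelyContinuous_of_KL_eq_coe hs) <|
      le_iSup_of_le (absolutelyContinuous_of_KL_eq_coe ht) <| le_iSup_of_le hs <|
      le_iSup_of_le ht le_rfl

theorem coe_sub_le_phiNeg (hκ : IsCondKernel P κ) (hg : Measurable g)
    (hδ : δ ≠ 0) (hδg : ∀ x, δ ≤ g x) (hg1 : ∀ x, g x ≤ 1) (hq0 : 0 < q) (hq1 : q < 1)
    [IsProbabilityMeasure QX] (hs : KL QX (m1 P) = s) :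
    ((negLog (enorm (m2 P) (kernelMean κ g) q) - ∫ x, negLog (g x) ∂QX : ℝ) : EReal) ≤
      phiNeg P (q / (q - 1)) s := by
  have hr : q / (q - 1) < 0 := div_neg_of_pos_of_neg hq0 (by linarith)
  refine le_iSup_of_le QX <| le_iSup_of_le inferInstance <|
    le_iSup_of_le (absolutelyContinuous_of_KL_eq_coe hs) <| le_iSup_of_le hs <|
    le_iInf fun QY => le_iInf fun hQY => le_iInf fun _ => ?_
  rcases KL_eq_top_or_coe QY (m2 P) with ht | ⟨t, ht⟩
  · rw [ht, ediv_top_of_neg hr, EReal.sub_bot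
      (EReal.bot_lt_zero.trans_le (Dmin_nonneg QX QY P)).ne']
    exact le_top
  have hFm := measurable_kernelMean κ hg
  have hF1 := kernelMean_le κ hg1
  have hnorm := negLog_enorm_le hq0 ht hFm
    (Eventually.of_forall fun y => (hδ.bot_lt.trans_le (le_kernelMean κ hδg y)).ne')
    (ne_top_of_le_ne_top ENNReal.one_ne_top ((lintegral_mono fun y =>
      ENNReal.rpow_le_one (hF1 y) hq0.le).trans (by simp)))
    (integrable_negLog hFm hδ (Eventually.of_forall (le_kernelMean κ hδg))
      (Eventually.of_forall hF1))
  rw [ht, ediv_coe t hr.ne, div_div_sub_one hq0.ne' hq1.ne]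
  exact coe_sub_le_Dmin_sub hκ hg hδ hδg hg1 ht (by linarith)

theorem coe_sub_le_phiLT1 (hκ : IsCondKernel P κ) (hg : Measurable g)
    (hδ : δ ≠ 0) (hδg : ∀ x, δ ≤ g x) (hg1 : ∀ x, g x ≤ 1) (hq1 : q < 1) (hq0 : q ≠ 0)
    [IsProbabilityMeasure QX] (hs : KL QX (m1 P) = s) :
    ((negLog (enorm (m2 P) (kernelMean κ g) q) - ∫ x, negLog (g x) ∂QX : ℝ) : EReal) ≤
      phiLT1 P (q / (q - 1)) s := by
  rcases lt_or_gt_of_ne hq0 with hneg | hpos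
  · rw [phiLT1, if_pos (div_pos_of_neg_of_neg hneg (by linarith))]
    exact coe_sub_le_phiSupR hκ hg hδ hδg hg1 hneg hs
  · rw [phiLT1, if_neg (div_neg_of_pos_of_neg hpos (by linarith)).not_gt]
    exact coe_sub_le_phiNeg hκ hg hδ hδg hg1 hpos hq1 hs

end SingleLetterUpper

section SingleLetterLower

theorem divE_conj {q : ℝ} (hq : 1 ≤ q) (t : ℝ) : divE t (conj q) = ((t - t / q : ℝ) : EReal) := by
  rcases eq_or_ne q 1 with rfl | hq1
  · simp [divE, conj]
  · rw [conj, if_neg hq1, divE_coe, div_div_sub_one (by linarith) hq1]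

theorem reweighted_le_smul (P : Measure X) {f : X → ℝ≥0∞} {B : ℝ≥0∞} (hfB : ∀ x, f x ≤ B) :
    reweighted P f ≤ (B / ∫⁻ x, f x ∂P) • P := by
  rw [reweighted, ← withDensity_const]
  exact withDensity_mono (Eventually.of_forall fun x => ENNReal.div_le_div_right (hfB x) _)

theorem exists_KL_map_reweighted_eq_coe {P : Measure X} [IsFiniteMeasure P] {f : X → ℝ≥0∞}
    {B : ℝ≥0∞} (hB : B ≠ ⊤) (hfB : ∀ x, f x ≤ B) (h0 : ∫⁻ x, f x ∂P ≠ 0)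
    [IsProbabilityMeasure (reweighted P f)] {φ : X → Y} (hφ : Measurable φ) :
    ∃ d : ℝ, KL ((reweighted P f).map φ) (P.map φ) = d := by
  have := Measure.isProbabilityMeasure_map (μ := reweighted P f) hφ.aemeasurable
  refine exists_KL_eq_coe_of_le_smul (ENNReal.div_ne_top hB h0) ?_
  rw [← Measure.map_smul]
  exact Measure.map_mono (reweighted_le_smul P hfB) hφ

theorem integrable_integral_negLog_mul {μ : Measure X} {u v : X → ℝ≥0∞} (hu : Measurable u)
    (hu1 : ∀ x, u x ≤ 1) (hv1 : ∀ x, v x ≤ 1) (h0 : ∀ᵐ x ∂μ, u x * v x ≠ 0)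
    (hint : Integrable (fun x => negLog (u x * v x)) μ) :
    Integrable (fun x => negLog (u x)) μ ∧ Integrable (fun x => negLog (v x)) μ ∧
      ∫ x, negLog (u x * v x) ∂μ = ∫ x, negLog (u x) ∂μ + ∫ x, negLog (v x) ∂μ := by
  have hlog : (fun x => negLog (u x * v x)) =ᵐ[μ] fun x => negLog (u x) + negLog (v x) :=
    h0.mono fun x hx => negLog_mul (left_ne_zero_of_mul hx)
      (ne_top_of_le_ne_top ENNReal.one_ne_top (hu1 x)) (right_ne_zero_of_mul hx)
      (ne_top_of_le_ne_top ENNReal.one_ne_top (hv1 x))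
  obtain ⟨hu_int, hv_int⟩ := (integrable_add_iff_of_nonneg
    (measurable_negLog.comp hu).aestronglyMeasurable
    (Eventually.of_forall fun x => negLog_nonneg (hu1 x))
    (Eventually.of_forall fun x => negLog_nonneg (hv1 x))).1 (hint.congr hlog)
  exact ⟨hu_int, hv_int, (integral_congr_ae hlog).trans (integral_add hu_int hv_int)⟩

theorem sub_one_mul_negLog_enorm_le {P Q : Measure X} [IsProbabilityMeasure P]
    [IsProbabilityMeasure Q] {F : X → ℝ≥0∞} {q t : ℝ} (hq : 1 ≤ q) (ht : KL Q P = t)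
    (hF : Measurable F) (hF0 : ∀ᵐ x ∂Q, F x ^ (q - 1) ≠ 0) (hFP : ∫⁻ x, F x ^ q ∂P ≠ ⊤)
    (hint : Integrable (fun x => negLog (F x ^ (q - 1))) Q) :
    (q - 1) * negLog (enorm P F q) ≤ t - t / q + ∫ x, negLog (F x ^ (q - 1)) ∂Q := by
  rcases hq.eq_or_lt with rfl | hq1
  · simp
  have hq0 : 0 < q := by linarith
  have hq1' : 0 < q - 1 := by linarith
  simp only [negLog_rpow] at hint ⊢
  have hnorm := negLog_enorm_le hq0 ht hF
    (hF0.mono fun x hx h => hx (by rw [h, ENNReal.zero_rpow_of_pos hq1'])) hFP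
    ((integrable_const_mul_iff hq1'.ne'.isUnit _).1 hint)
  calc (q - 1) * negLog (enorm P F q) ≤ (q - 1) * (t / q + ∫ x, negLog (F x) ∂Q) := by gcongr
    _ = t - t / q + ∫ x, (q - 1) * negLog (F x) ∂Q := by
      rw [integral_const_mul]
      field

/- The measure `π` is the reweighting of `P` by `(x, y) ↦ g x * h y`. -/
theorem exists_KL_eq_of_mul {P : Measure (X × Y)} [IsFiniteMeasure P] {g : X → ℝ≥0∞}
    {h : Y → ℝ≥0∞} (hg : Measurable g) (hh : Measurable h) (hg1 : ∀ x, g x ≤ 1)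
    (hh1 : ∀ y, h y ≤ 1) (h0 : ∫⁻ z, g z.1 * h z.2 ∂P ≠ 0) :
    ∃ (π : Measure (X × Y)) (s t : ℝ), IsProbabilityMeasure π ∧
      KL (m1 π) (m1 P) = s ∧ KL (m2 π) (m2 P) = t ∧
      (∀ᵐ x ∂m1 π, g x ≠ 0) ∧ (∀ᵐ y ∂m2 π, h y ≠ 0) ∧
      Integrable (fun x => negLog (g x)) (m1 π) ∧ Integrable (fun y => negLog (h y)) (m2 π) ∧
      KL π P = ((negLog (∫⁻ z, g z.1 * h z.2 ∂P) -
        (∫ x, negLog (g x) ∂m1 π + ∫ y, negLog (h y) ∂m2 π) : ℝ) : EReal) := by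
  have hfm : Measurable fun z : X × Y => g z.1 * h z.2 := by fun_prop
  have hf1 : ∀ z : X × Y, g z.1 * h z.2 ≤ 1 := fun z => mul_le_one' (hg1 _) (hh1 _)
  have hf_top : ∫⁻ z, g z.1 * h z.2 ∂P ≠ ⊤ :=
    ne_top_of_le_ne_top (measure_ne_top P Set.univ) ((lintegral_mono hf1).trans (by simp))
  have hπ := isProbabilityMeasure_reweighted hfm h0 hf_top
  obtain ⟨s, hs⟩ := exists_KL_map_reweighted_eq_coe ENNReal.one_ne_top hf1 h0 measurable_fst
  obtain ⟨t, ht⟩ := exists_KL_map_reweighted_eq_coe ENNReal.one_ne_top hf1 h0 measurable_snd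
  have hf0 := ae_reweighted_ne_zero (P := P) hfm
  have hsplit := integrable_integral_negLog_mul (μ := reweighted P fun z => g z.1 * h z.2)
    (u := fun z => g z.1) (v := fun z => h z.2) (by fun_prop) (fun z => hg1 z.1)
    (fun z => hh1 z.2) hf0
    (integrable_negLog_reweighted hfm h0 ENNReal.one_ne_top (Eventually.of_forall hf1))
  obtain ⟨hg_int, hh_int, hsum⟩ := hsplit
  have hfst := measurable_fst.measurePreserving (reweighted P fun z : X × Y => g z.1 * h z.2)
  have hsnd := measurable_snd.measurePreserving (reweighted P fun z : X × Y => g z.1 * h z.2)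
  refine ⟨_, s, t, hπ, hs, ht, ?_, ?_, ?_, ?_, ?_⟩
  · exact (ae_map_iff measurable_fst.aemeasurable (hg (measurableSet_singleton 0).compl)).2
      (hf0.mono fun z hz => left_ne_zero_of_mul hz)
  · exact (ae_map_iff measurable_snd.aemeasurable (hh (measurableSet_singleton 0).compl)).2
      (hf0.mono fun z hz => right_ne_zero_of_mul hz)
  · exact (hfst.integrable_comp (measurable_negLog.comp hg).aestronglyMeasurable).1 hg_int
  · exact (hsnd.integrable_comp (measurable_negLog.comp hh).aestronglyMeasurable).1 hh_int
  · rw [KL_reweighted hfm h0 ENNReal.one_ne_top (Eventually.of_forall hf1) hf_top, hsum,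
      integral_negLog_comp hfst hg, integral_negLog_comp hsnd hh]
    rfl

variable {P : Measure (X × Y)} [IsProbabilityMeasure P] {κ : Kernel Y X} [IsMarkovKernel κ]
  {g : X → ℝ≥0∞} {q : ℝ}

theorem lintegral_mul_kernelMean_rpow (hκ : IsCondKernel P κ) (hg : Measurable g) (hq : 1 ≤ q) :
    ∫⁻ z, g z.1 * kernelMean κ g z.2 ^ (q - 1) ∂P = ∫⁻ y, kernelMean κ g y ^ q ∂m2 P := by
  rw [lintegral_fst_mul_snd hκ hg ((measurable_kernelMean κ hg).pow_const (q - 1))]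
  refine lintegral_congr fun y => ?_
  simpa using (ENNReal.rpow_add_of_nonneg (x := kernelMean κ g y) 1 (q - 1) zero_le_one
    (sub_nonneg.2 hq)).symm

/- The optimal coupling has density proportional to `g x * 𝔼[g(X) | Y = y] ^ (q - 1)`. -/
theorem exists_phiRinf_le (hκ : IsCondKernel P κ) (hg : Measurable g) (hg1 : ∀ x, g x ≤ 1)
    (hq : 1 ≤ q) (h0 : ∫⁻ y, kernelMean κ g y ^ q ∂m2 P ≠ 0) :
    ∃ (Q : Measure X) (s : ℝ), IsProbabilityMeasure Q ∧ KL Q (m1 P) = s ∧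
      (∀ᵐ x ∂Q, g x ≠ 0) ∧ Integrable (fun x => negLog (g x)) Q ∧
      phiRinf P (conj q) s ≤
        ((negLog (enorm (m2 P) (kernelMean κ g) q) - ∫ x, negLog (g x) ∂Q : ℝ) : EReal) := by
  set F := kernelMean κ g
  have hFm : Measurable F := measurable_kernelMean κ hg
  have hF1 : ∀ y, F y ≤ 1 := kernelMean_le κ hg1
  have hFq1 : ∀ y, F y ^ (q - 1) ≤ 1 := fun y => ENNReal.rpow_le_one (hF1 y) (by linarith)
  have hFqm : Measurable fun y => F y ^ (q - 1) := hFm.pow_const _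
  have hZ_top : ∫⁻ y, F y ^ q ∂m2 P ≠ ⊤ := ne_top_of_le_ne_top ENNReal.one_ne_top
    ((lintegral_mono fun y => ENNReal.rpow_le_one (hF1 y) (by linarith)).trans (by simp))
  have hmass := lintegral_mul_kernelMean_rpow hκ hg hq
  obtain ⟨π, s, t, hπ, hs, ht, hg0, hF0, hg_int, hF_int, hKL⟩ :=
    exists_KL_eq_of_mul hg hFqm hg1 hFq1 (hmass ▸ h0)
  refine ⟨m1 π, s, inferInstance, hs, hg0, hg_int, ?_⟩
  have hphi : phiL P s t ≤ KL π P :=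
    iInf_le_of_le (m1 π) <| iInf_le_of_le (m2 π) <| iInf_le_of_le inferInstance <|
      iInf_le_of_le inferInstance <| iInf_le_of_le (absolutelyContinuous_of_KL_eq_coe hs) <|
      iInf_le_of_le (absolutelyContinuous_of_KL_eq_coe ht) <| iInf_le_of_le hs <|
      iInf_le_of_le ht <| iInf₂_le π ⟨hπ, rfl, rfl⟩
  refine iInf₂_le_of_le t (KL_nonneg ht) ((EReal.sub_le_sub hphi le_rfl).trans ?_)
  rw [hKL, hmass, divE_conj hq, ← EReal.coe_sub, EReal.coe_le_coe_iff]
  have hnorm := sub_one_mul_negLog_enorm_le hq ht hFm hF0 hZ_top hF_int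
  have hZ : negLog (∫⁻ y, F y ^ q ∂m2 P) = q * negLog (enorm (m2 P) F q) := by
    rw [negLog_enorm]
    field
  linarith

end SingleLetterLower

section Minkowski

variable {V : Type*} [MeasurableSpace V] {ν : Measure V} {F G N h : V → ℝ≥0∞} {a b : ℝ≥0∞} {q : ℝ}

theorem enorm_rpow_self (hq : q ≠ 0) : enorm ν F q ^ q = ∫⁻ v, F v ^ q ∂ν := by
  rw [enorm, ← ENNReal.rpow_mul, one_div_mul_cancel hq, ENNReal.rpow_one]

theorem enorm_const [IsProbabilityMeasure ν] (c : ℝ≥0∞) (hq : q ≠ 0) :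
    enorm ν (fun _ => c) q = c := by
  simp [enorm, ← ENNReal.rpow_mul, hq]

theorem enorm_mono (hFG : ∀ v, F v ≤ G v) : enorm ν F q ≤ enorm ν G q := by
  rcases lt_trichotomy q 0 with hq | rfl | hq
  · exact ennreal_rpow_le_rpow_of_neg (one_div_neg.2 hq)
      (lintegral_mono fun v => ennreal_rpow_le_rpow_of_neg hq (hFG v))
  · simp [enorm]
  · exact ENNReal.rpow_le_rpow
      (lintegral_mono fun v => ENNReal.rpow_le_rpow (hFG v) hq.le) (one_div_pos.2 hq).le

theorem le_enorm [IsProbabilityMeasure ν] (hq : q ≠ 0) (haF : ∀ v, a ≤ F v) :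
    a ≤ enorm ν F q :=
  (enorm_const a hq).symm.le.trans (enorm_mono haF)

theorem enorm_le [IsProbabilityMeasure ν] (hq : q ≠ 0) (hFb : ∀ v, F v ≤ b) :
    enorm ν F q ≤ b :=
  (enorm_mono hFb).trans (enorm_const b hq).le

theorem lintegral_rpow_ne_zero_ne_top [IsProbabilityMeasure ν] (hq : q ≠ 0) (ha : a ≠ 0)
    (hb : b ≠ ⊤) (haF : ∀ v, a ≤ F v) (hFb : ∀ v, F v ≤ b) :
    ∫⁻ v, F v ^ q ∂ν ≠ 0 ∧ ∫⁻ v, F v ^ q ∂ν ≠ ⊤ := by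
  rw [← enorm_rpow_self hq]
  have h0 : enorm ν F q ≠ 0 := (ha.bot_lt.trans_le (le_enorm hq haF)).ne'
  have ht : enorm ν F q ≠ ⊤ := ne_top_of_le_ne_top hb (enorm_le hq hFb)
  exact ⟨(ENNReal.rpow_pos h0.bot_lt ht).ne', ENNReal.rpow_ne_top_of_ne_zero h0 ht⟩

theorem lintegral_rpow_sub_one_mul_le (hq : 1 ≤ q) (hN : Measurable N) (hh : Measurable h) :
    ∫⁻ v, N v ^ (q - 1) * h v ∂ν ≤ (∫⁻ v, N v ^ q ∂ν) ^ (1 - 1 / q) * enorm ν h q := by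
  have hq0 : 0 < q := by linarith
  have hHolder := ENNReal.lintegral_mul_norm_pow_le (μ := ν) (hN.pow_const q).aemeasurable
    (hh.pow_const q).aemeasurable (sub_nonneg.2 ((div_le_one hq0).2 hq)) (one_div_pos.2 hq0).le
    (sub_add_cancel 1 (1 / q))
  refine le_of_eq_of_le (lintegral_congr fun v => ?_) hHolder
  rw [← ENNReal.rpow_mul, ← ENNReal.rpow_mul, mul_one_div_cancel hq0.ne', ENNReal.rpow_one,
    mul_one_sub, mul_one_div_cancel hq0.ne']

theorem enorm_le_mul_lintegral_of_pos (hq0 : 0 < q) (hq1 : q < 1) (hN : Measurable N)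
    (hh : Measurable h) (hN0 : ∀ v, N v ≠ 0) (hNt : ∀ v, N v ≠ ⊤) :
    enorm ν h q ≤ (∫⁻ v, N v ^ q ∂ν) ^ (1 / q - 1) * ∫⁻ v, N v ^ (q - 1) * h v ∂ν := by
  have hHolder := ENNReal.lintegral_mul_norm_pow_le (μ := ν)
    (f := fun v => N v ^ (q - 1) * h v) (g := fun v => N v ^ q)
    ((hN.pow_const (q - 1)).mul hh).aemeasurable (hN.pow_const q).aemeasurable hq0.le
    (sub_nonneg.2 hq1.le) (add_sub_cancel q 1)
  have hpt : ∀ v, (N v ^ (q - 1) * h v) ^ q * (N v ^ q) ^ (1 - q) = h v ^ q := fun v => by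
    rw [ENNReal.mul_rpow_of_nonneg _ _ hq0.le, mul_right_comm, ← ENNReal.rpow_mul,
      ← ENNReal.rpow_mul, ← ENNReal.rpow_add _ _ (hN0 v) (hNt v),
      show (q - 1) * q + q * (1 - q) = 0 by ring, ENNReal.rpow_zero, one_mul]
  simp only [hpt] at hHolder
  calc enorm ν h q
      ≤ ((∫⁻ v, N v ^ (q - 1) * h v ∂ν) ^ q * (∫⁻ v, N v ^ q ∂ν) ^ (1 - q)) ^ (1 / q) :=
        ENNReal.rpow_le_rpow hHolder (one_div_pos.2 hq0).le
    _ = (∫⁻ v, N v ^ q ∂ν) ^ (1 / q - 1) * ∫⁻ v, N v ^ (q - 1) * h v ∂ν := by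
        rw [ENNReal.mul_rpow_of_nonneg _ _ (one_div_pos.2 hq0).le, ← ENNReal.rpow_mul,
          ← ENNReal.rpow_mul, mul_one_div_cancel hq0.ne', ENNReal.rpow_one, mul_comm,
          one_sub_mul, mul_one_div_cancel hq0.ne']

theorem enorm_le_mul_lintegral_of_neg (hq : q < 0) (hN : Measurable N) (hh : Measurable h)
    (hh0 : ∀ v, h v ≠ 0) (hht : ∀ v, h v ≠ ⊤) (hH0 : ∫⁻ v, h v ^ q ∂ν ≠ 0)
    (hB0 : ∫⁻ v, N v ^ (q - 1) * h v ∂ν ≠ 0) (hBt : ∫⁻ v, N v ^ (q - 1) * h v ∂ν ≠ ⊤) :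
    enorm ν h q ≤ (∫⁻ v, N v ^ q ∂ν) ^ (1 / q - 1) * ∫⁻ v, N v ^ (q - 1) * h v ∂ν := by
  set B := ∫⁻ v, N v ^ (q - 1) * h v ∂ν
  have hqne := hq.ne
  have hq1 : 0 < 1 - q := by linarith
  have hθ : 0 ≤ -q / (1 - q) := by have := neg_pos.2 hq; positivity
  have hHolder := ENNReal.lintegral_mul_norm_pow_le (μ := ν)
    (f := fun v => N v ^ (q - 1) * h v) (g := fun v => h v ^ q)
    ((hN.pow_const (q - 1)).mul hh).aemeasurable (hh.pow_const q).aemeasurable hθ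
    (one_div_pos.2 hq1).le (by field)
  have hpt : ∀ v, (N v ^ (q - 1) * h v) ^ (-q / (1 - q)) * (h v ^ q) ^ (1 / (1 - q)) =
      N v ^ q := fun v => by
    rw [ENNReal.mul_rpow_of_nonneg _ _ hθ, mul_assoc, ← ENNReal.rpow_mul, ← ENNReal.rpow_mul,
      ← ENNReal.rpow_add _ _ (hh0 v) (hht v), show -q / (1 - q) + q * (1 / (1 - q)) = 0 by ring,
      ENNReal.rpow_zero, mul_one, show (q - 1) * (-q / (1 - q)) = q by field]
  simp only [hpt] at hHolder
  have hexp : 1 / q - 1 < 0 := by have := one_div_neg.2 hq; linarith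
  calc enorm ν h q
      = (B ^ (-q / (1 - q)) * (∫⁻ v, h v ^ q ∂ν) ^ (1 / (1 - q))) ^ (1 / q - 1) * B := by
        rw [ENNReal.mul_rpow_of_ne_zero (ENNReal.rpow_pos hB0.bot_lt hBt).ne'
          (fun h0 => hH0 ((ENNReal.rpow_eq_zero_iff_of_pos (one_div_pos.2 hq1)).1 h0)),
          ← ENNReal.rpow_mul, ← ENNReal.rpow_mul, show -q / (1 - q) * (1 / q - 1) = -1 by field,
          show 1 / (1 - q) * (1 / q - 1) = 1 / q by field, ENNReal.rpow_neg_one, mul_right_comm,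
          ENNReal.inv_mul_cancel hB0 hBt, one_mul, enorm]
    _ ≤ (∫⁻ v, N v ^ q ∂ν) ^ (1 / q - 1) * B :=
        mul_le_mul' (ennreal_rpow_le_rpow_of_neg hexp hHolder) le_rfl

theorem enorm_le_mul_lintegral [IsProbabilityMeasure ν] (hq1 : q < 1) (hq0 : q ≠ 0)
    (hN : Measurable N) (hh : Measurable h) (ha : a ≠ 0) (hb : b ≠ ⊤) (haN : ∀ v, a ≤ N v)
    (hNb : ∀ v, N v ≤ b) (hah : ∀ v, a ≤ h v) (hhb : ∀ v, h v ≤ b) :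
    enorm ν h q ≤ (∫⁻ v, N v ^ q ∂ν) ^ (1 / q - 1) * ∫⁻ v, N v ^ (q - 1) * h v ∂ν := by
  have hN0 : ∀ v, N v ≠ 0 := fun v => (ha.bot_lt.trans_le (haN v)).ne'
  have hNt : ∀ v, N v ≠ ⊤ := fun v => ne_top_of_le_ne_top hb (hNb v)
  have hh0 : ∀ v, h v ≠ 0 := fun v => (ha.bot_lt.trans_le (hah v)).ne'
  have hht : ∀ v, h v ≠ ⊤ := fun v => ne_top_of_le_ne_top hb (hhb v)
  rcases hq0.lt_or_gt with hneg | hpos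
  · have hB0 : ∫⁻ v, N v ^ (q - 1) * h v ∂ν ≠ 0 :=
      lintegral_ne_zero_of_ae_ne_zero ((hN.pow_const _).mul hh) <| Eventually.of_forall fun v =>
        mul_ne_zero (ENNReal.rpow_pos (hN0 v).bot_lt (hNt v)).ne' (hh0 v)
    have hBt : ∫⁻ v, N v ^ (q - 1) * h v ∂ν ≠ ⊤ := by
      have haq : a ^ (q - 1) ≠ ⊤ := by simp [ENNReal.rpow_eq_top_iff, ha, hq1.le]
      refine ne_top_of_le_ne_top (ENNReal.mul_ne_top haq hb) ((lintegral_mono fun v =>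
        mul_le_mul' (ennreal_rpow_le_rpow_of_neg (sub_neg.2 hq1) (haN v)) (hhb v)).trans ?_)
      simp
    exact enorm_le_mul_lintegral_of_neg hneg hN hh hh0 hht
      (lintegral_rpow_ne_zero_ne_top hq0 ha hb hah hhb).1 hB0 hBt
  · exact enorm_le_mul_lintegral_of_pos hpos hq1 hN hh hN0 hNt

variable {μ : Measure X} {f : X × V → ℝ≥0∞}

theorem lintegral_lintegral_rpow_sub_one_mul [SFinite μ] [SFinite ν] (hf : Measurable f) :
    ∫⁻ x, ∫⁻ v, (∫⁻ x', f (x', v) ∂μ) ^ (q - 1) * f (x, v) ∂ν ∂μ =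
      ∫⁻ v, (∫⁻ x, f (x, v) ∂μ) ^ (q - 1) * ∫⁻ x, f (x, v) ∂μ ∂ν := by
  rw [lintegral_lintegral_swap (((hf.lintegral_prod_left'.comp measurable_snd).pow_const
    _).mul hf).aemeasurable]
  exact lintegral_congr fun v => lintegral_const_mul _ (by fun_prop)

theorem measurable_enorm_prodMk_left [SFinite ν] (hf : Measurable f) :
    Measurable fun x => enorm ν (fun v => f (x, v)) q :=
  (hf.pow_const q).lintegral_prod_right'.pow_const (1 / q)

theorem enorm_lintegral_le [SFinite μ] [SFinite ν] (hf : Measurable f) (hq : 1 ≤ q)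
    (hfin : ∫⁻ v, (∫⁻ x, f (x, v) ∂μ) ^ q ∂ν ≠ ⊤) :
    enorm ν (fun v => ∫⁻ x, f (x, v) ∂μ) q ≤ ∫⁻ x, enorm ν (fun v => f (x, v)) q ∂μ := by
  set N : V → ℝ≥0∞ := fun v => ∫⁻ x, f (x, v) ∂μ
  have hN : Measurable N := hf.lintegral_prod_left'
  set S := ∫⁻ v, N v ^ q ∂ν
  have hq0 : 0 < q := by linarith
  rcases eq_or_ne S 0 with h0 | h0
  · rw [enorm, show ∫⁻ v, N v ^ q ∂ν = 0 from h0, ENNReal.zero_rpow_of_pos (one_div_pos.2 hq0)]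
    exact zero_le
  have hpow : ∀ v, N v ^ (q - 1) * N v = N v ^ q := fun v => by
    simpa using (ENNReal.rpow_add_of_nonneg (x := N v) (q - 1) 1 (by linarith) zero_le_one).symm
  have hS : S ^ (1 - 1 / q) * S ^ (1 / q) ≤
      S ^ (1 - 1 / q) * ∫⁻ x, enorm ν (fun v => f (x, v)) q ∂μ := by
    calc S ^ (1 - 1 / q) * S ^ (1 / q) = S := by
          rw [← ENNReal.rpow_add _ _ h0 hfin, sub_add_cancel, ENNReal.rpow_one]
      _ = ∫⁻ x, ∫⁻ v, N v ^ (q - 1) * f (x, v) ∂ν ∂μ := by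
          rw [lintegral_lintegral_rpow_sub_one_mul hf]
          exact (lintegral_congr hpow).symm
      _ ≤ ∫⁻ x, S ^ (1 - 1 / q) * enorm ν (fun v => f (x, v)) q ∂μ :=
          lintegral_mono fun x => lintegral_rpow_sub_one_mul_le hq hN (by fun_prop)
      _ = S ^ (1 - 1 / q) * ∫⁻ x, enorm ν (fun v => f (x, v)) q ∂μ :=
          lintegral_const_mul _ (measurable_enorm_prodMk_left hf)
  exact (ENNReal.mul_le_mul_iff_right (ENNReal.rpow_pos h0.bot_lt hfin).ne'
    (ENNReal.rpow_ne_top_of_ne_zero h0 hfin)).1 hS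

theorem lintegral_enorm_le [IsProbabilityMeasure μ] [IsProbabilityMeasure ν] (hf : Measurable f)
    (ha : a ≠ 0) (hb : b ≠ ⊤) (haf : ∀ z, a ≤ f z) (hfb : ∀ z, f z ≤ b) (hq1 : q < 1)
    (hq0 : q ≠ 0) :
    ∫⁻ x, enorm ν (fun v => f (x, v)) q ∂μ ≤ enorm ν (fun v => ∫⁻ x, f (x, v) ∂μ) q := by
  set N : V → ℝ≥0∞ := fun v => ∫⁻ x, f (x, v) ∂μ
  have hN : Measurable N := hf.lintegral_prod_left'
  have haN : ∀ v, a ≤ N v := fun v => by simpa using lintegral_mono (μ := μ) fun x => haf (x, v)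
  have hNb : ∀ v, N v ≤ b := fun v => by simpa using lintegral_mono (μ := μ) fun x => hfb (x, v)
  set S := ∫⁻ v, N v ^ q ∂ν
  obtain ⟨hS0, hSt⟩ : S ≠ 0 ∧ S ≠ ⊤ := lintegral_rpow_ne_zero_ne_top hq0 ha hb haN hNb
  have hpow : ∀ v, N v ^ (q - 1) * N v = N v ^ q := fun v => by
    simpa using (ENNReal.rpow_add (x := N v) (q - 1) 1 (ha.bot_lt.trans_le (haN v)).ne'
      (ne_top_of_le_ne_top hb (hNb v))).symm
  calc ∫⁻ x, enorm ν (fun v => f (x, v)) q ∂μ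
      ≤ ∫⁻ x, S ^ (1 / q - 1) * ∫⁻ v, N v ^ (q - 1) * f (x, v) ∂ν ∂μ :=
        lintegral_mono fun x => enorm_le_mul_lintegral hq1 hq0 hN (by fun_prop) ha hb haN hNb
          (fun v => haf (x, v)) (fun v => hfb (x, v))
    _ = S ^ (1 / q - 1) * ∫⁻ x, ∫⁻ v, N v ^ (q - 1) * f (x, v) ∂ν ∂μ :=
        lintegral_const_mul _
          (((hN.comp measurable_snd).pow_const _).mul hf).lintegral_prod_right'
    _ = S ^ (1 / q - 1) * S := by
        rw [lintegral_lintegral_rpow_sub_one_mul hf]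
        exact congrArg _ (lintegral_congr hpow)
    _ = S ^ (1 / q) := by
        simpa using (ENNReal.rpow_add (1 / q - 1) 1 hS0 hSt).symm

end Minkowski

section Products

theorem measurable_fin_cons {n : ℕ} :
    Measurable fun z : X × (Fin n → X) => (Fin.cons z.1 z.2 : Fin (n + 1) → X) := by
  refine measurable_pi_iff.2 (Fin.cases ?_ fun i => ?_)
  · simpa using measurable_fst
  · simpa using! (measurable_pi_apply i).comp measurable_snd

theorem measurableSet_sec {n : ℕ} {A : Set (Fin (n + 1) → X)} (hA : MeasurableSet A) (x : X) :
    MeasurableSet (sec A x) :=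
  (measurable_fin_cons.comp measurable_prodMk_left) hA

theorem lintegral_pi_succ {n : ℕ} (μ : Fin (n + 1) → Measure X) [∀ i, SigmaFinite (μ i)]
    {f : (Fin (n + 1) → X) → ℝ≥0∞} (hf : Measurable f) :
    ∫⁻ z, f z ∂Measure.pi μ =
      ∫⁻ x, ∫⁻ v, f (Fin.cons x v) ∂Measure.pi (fun i : Fin n => μ i.succ) ∂μ 0 := by
  have he := (measurePreserving_piFinSuccAbove μ 0).symm
  rw [← he.map_eq, lintegral_map hf he.measurable, lintegral_prod]
  · simp [MeasurableEquiv.piFinSuccAbove, Fin.consEquiv]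
  · exact (hf.comp he.measurable).aemeasurable

theorem pi_succ_apply {n : ℕ} (μ : Fin (n + 1) → Measure X) [∀ i, SigmaFinite (μ i)]
    {A : Set (Fin (n + 1) → X)} (hA : MeasurableSet A) :
    Measure.pi μ A = ∫⁻ x, Measure.pi (fun i : Fin n => μ i.succ) (sec A x) ∂μ 0 := by
  rw [← lintegral_indicator_one hA, lintegral_pi_succ μ (measurable_one.indicator hA)]
  refine lintegral_congr fun x => ?_
  rw [← lintegral_indicator_one (measurableSet_sec hA x)]
  rfl

section PiM

variable {n : ℕ} (μ : Measure X)

instance [IsProbabilityMeasure μ] : IsProbabilityMeasure (piM n μ) :=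
  inferInstanceAs (IsProbabilityMeasure (Measure.pi _))

theorem lintegral_piM_succ [SigmaFinite μ] {f : (Fin (n + 1) → X) → ℝ≥0∞} (hf : Measurable f) :
    ∫⁻ z, f z ∂piM (n + 1) μ = ∫⁻ x, ∫⁻ v, f (Fin.cons x v) ∂piM n μ ∂μ :=
  lintegral_pi_succ (fun _ => μ) hf

theorem piM_succ_apply [SigmaFinite μ] {A : Set (Fin (n + 1) → X)} (hA : MeasurableSet A) :
    piM (n + 1) μ A = ∫⁻ x, piM n μ (sec A x) ∂μ :=
  pi_succ_apply (fun _ => μ) hA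

theorem measurable_piM_sec [IsProbabilityMeasure μ] {A : Set (Fin (n + 1) → X)}
    (hA : MeasurableSet A) : Measurable fun x => piM n μ (sec A x) :=
  measurable_measure_prodMk_left (measurable_fin_cons hA)

end PiM

variable {n : ℕ} (κ : Kernel Y X) [IsMarkovKernel κ]

instance (y : Fin n → Y) : IsProbabilityMeasure (kpi κ y) :=
  inferInstanceAs (IsProbabilityMeasure (Measure.pi _))

/-- The memoryless kernel `kpi κ`, bundled as a Markov kernel. -/
def memorylessKernel (n : ℕ) : Kernel (Fin n → Y) (Fin n → X) where
  toFun := kpi κ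
  measurable' := by
    refine Measurable.measure_of_isPiSystem_of_isProbabilityMeasure generateFrom_pi.symm
      isPiSystem_pi ?_
    rintro _ ⟨s, hs, rfl⟩
    simp only [kpi, Measure.pi_pi]
    exact Finset.measurable_prod _ fun i _ =>
      (κ.measurable_coe (hs i (mem_univ i))).comp (measurable_pi_apply i)

instance : IsMarkovKernel (memorylessKernel κ n) :=
  ⟨fun y => inferInstanceAs (IsProbabilityMeasure (kpi κ y))⟩

theorem measurable_kpi {A : Set (Fin n → X)} (hA : MeasurableSet A) :
    Measurable fun y : Fin n → Y => kpi κ y A :=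
  (memorylessKernel κ n).measurable_coe hA

theorem measurable_kpi_sec {A : Set (Fin (n + 1) → X)} (hA : MeasurableSet A) :
    Measurable fun z : X × (Fin n → Y) => kpi κ z.2 (sec A z.1) :=
  Kernel.measurable_kernel_prodMk_left (κ := (memorylessKernel κ n).comap Prod.snd measurable_snd)
    ((measurable_fin_cons.comp ((measurable_fst.comp measurable_fst).prodMk measurable_snd)) hA)

theorem kpi_cons {A : Set (Fin (n + 1) → X)} (hA : MeasurableSet A) (y₀ : Y) (y : Fin n → Y) :
    kpi κ (Fin.cons y₀ y : Fin (n + 1) → Y) A = kernelMean κ (fun x => kpi κ y (sec A x)) y₀ := by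
  have := pi_succ_apply (fun i => κ ((Fin.cons y₀ y : Fin (n + 1) → Y) i)) hA
  simpa only [kpi, kernelMean, Fin.cons_zero, Fin.cons_succ] using this

variable {κ} {P : Measure (X × Y)} [IsProbabilityMeasure P]

theorem piM_m1_apply (hκ : IsCondKernel P κ) {A : Set (Fin n → X)} (hA : MeasurableSet A) :
    piM n (m1 P) A = ∫⁻ y, kpi κ y A ∂piM n (m2 P) := by
  induction n with
  | zero =>
    have hconst : ∀ y : Fin 0 → Y, kpi κ y A = piM 0 (m1 P) A := fun y =>
      congrArg (fun ν : Fin 0 → Measure X => Measure.pi ν A) (Subsingleton.elim _ _)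
    simp [hconst]
  | succ n ih =>
    rw [lintegral_piM_succ _ (measurable_kpi κ hA), piM_succ_apply _ hA,
      lintegral_congr fun x => ih (measurableSet_sec hA x),
      lintegral_m1 hκ (measurable_kpi_sec κ hA).lintegral_prod_right']
    refine lintegral_congr fun y₀ => ?_
    simp only [kpi_cons κ hA, kernelMean]
    exact lintegral_lintegral_swap (measurable_kpi_sec κ hA).aemeasurable

end Products

section Smoothing

variable {n : ℕ} {κ : Kernel Y X} {δ : ℝ≥0∞} {q : ℝ}

/-- The conditional expectation `P_{X|Y}^{⊗n}(𝟙_A + δ 𝟙_{Aᶜ} | y)`. A positive `δ` keeps it away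
from `0`, where negative powers and logarithms degenerate; `δ = 0` gives `P_{X|Y}^{⊗n}(A | y)`. -/
def smoothedProb (κ : Kernel Y X) (δ : ℝ≥0∞) (A : Set (Fin n → X)) (y : Fin n → Y) : ℝ≥0∞ :=
  kpi κ y A + δ * kpi κ y Aᶜ

theorem smoothedProb_zero (κ : Kernel Y X) (A : Set (Fin n → X)) (y : Fin n → Y) :
    smoothedProb κ 0 A y = kpi κ y A := by
  simp [smoothedProb]

variable [IsMarkovKernel κ]

theorem smoothedProb_univ (y : Fin n → Y) : smoothedProb κ δ Set.univ y = 1 := by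
  simp [smoothedProb]

theorem le_smoothedProb (hδ : δ ≤ 1) {A : Set (Fin n → X)} (hA : MeasurableSet A)
    (y : Fin n → Y) : δ ≤ smoothedProb κ δ A y :=
  calc δ = δ * kpi κ y A + δ * kpi κ y Aᶜ := by rw [← mul_add, prob_add_prob_compl hA, mul_one]
    _ ≤ smoothedProb κ δ A y := by
      rw [smoothedProb]
      gcongr
      exact mul_le_of_le_one_left' hδ

theorem smoothedProb_le_one (hδ : δ ≤ 1) {A : Set (Fin n → X)} (hA : MeasurableSet A)
    (y : Fin n → Y) : smoothedProb κ δ A y ≤ 1 :=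
  calc smoothedProb κ δ A y ≤ kpi κ y A + kpi κ y Aᶜ := by
        rw [smoothedProb]
        gcongr
        exact mul_le_of_le_one_left' hδ
    _ = 1 := prob_add_prob_compl hA

theorem measurable_smoothedProb {A : Set (Fin n → X)} (hA : MeasurableSet A) :
    Measurable (smoothedProb κ δ A) :=
  (measurable_kpi κ hA).add ((measurable_kpi κ hA.compl).const_mul δ)

theorem measurable_smoothedProb_sec {A : Set (Fin (n + 1) → X)} (hA : MeasurableSet A) :
    Measurable fun z : X × (Fin n → Y) => smoothedProb κ δ (sec A z.1) z.2 :=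
  (measurable_kpi_sec κ hA).add ((measurable_kpi_sec κ hA.compl).const_mul δ)

theorem smoothedProb_cons {A : Set (Fin (n + 1) → X)} (hA : MeasurableSet A) (y₀ : Y)
    (y : Fin n → Y) : smoothedProb κ δ A (Fin.cons y₀ y) =
      kernelMean κ (fun x => smoothedProb κ δ (sec A x) y) y₀ := by
  have hmeas : ∀ {B : Set (Fin (n + 1) → X)}, MeasurableSet B →
      Measurable fun x => kpi κ y (sec B x) := fun hB =>
    (measurable_kpi_sec κ hB).comp measurable_prodMk_right
  rw [smoothedProb, kpi_cons κ hA, kpi_cons κ hA.compl, kernelMean, kernelMean,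
    ← lintegral_const_mul _ (hmeas hA.compl), ← lintegral_add_left (hmeas hA)]
  rfl

/-- The `q`-norm of `smoothedProb κ δ A` under `P_Y^{⊗n}`. -/
def smoothedNorm (P : Measure (X × Y)) (κ : Kernel Y X) (q : ℝ) (δ : ℝ≥0∞)
    (A : Set (Fin n → X)) : ℝ≥0∞ :=
  enorm (piM n (m2 P)) (smoothedProb κ δ A) q

variable {P : Measure (X × Y)} [IsProbabilityMeasure P]

theorem le_smoothedNorm (hq : q ≠ 0) (hδ : δ ≤ 1) {A : Set (Fin n → X)}
    (hA : MeasurableSet A) : δ ≤ smoothedNorm P κ q δ A :=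
  le_enorm hq (le_smoothedProb hδ hA)

theorem smoothedNorm_le_one (hq : q ≠ 0) (hδ : δ ≤ 1) {A : Set (Fin n → X)}
    (hA : MeasurableSet A) : smoothedNorm P κ q δ A ≤ 1 :=
  enorm_le hq (smoothedProb_le_one hδ hA)

theorem measurable_smoothedNorm_sec {A : Set (Fin (n + 1) → X)} (hA : MeasurableSet A) :
    Measurable fun x => smoothedNorm P κ q δ (sec A x) :=
  measurable_enorm_prodMk_left (measurable_smoothedProb_sec hA)

theorem enorm_piM_succ (ν : Measure Y) [SigmaFinite ν] {F : (Fin (n + 1) → Y) → ℝ≥0∞}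
    (hF : Measurable F) (hq : q ≠ 0) :
    enorm (piM (n + 1) ν) F q =
      enorm ν (fun y₀ => enorm (piM n ν) (fun y => F (Fin.cons y₀ y)) q) q := by
  simp only [enorm, lintegral_piM_succ ν (hF.pow_const q),
    ← ENNReal.rpow_mul, one_div_mul_cancel hq, ENNReal.rpow_one]

theorem smoothedNorm_succ (hq : q ≠ 0) {A : Set (Fin (n + 1) → X)} (hA : MeasurableSet A) :
    smoothedNorm P κ q δ A = enorm (m2 P) (fun y₀ => enorm (piM n (m2 P))
      (fun y => ∫⁻ x, smoothedProb κ δ (sec A x) y ∂κ y₀) q) q := by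
  simp only [smoothedNorm, enorm_piM_succ (m2 P) (measurable_smoothedProb hA) hq,
    smoothedProb_cons hA, kernelMean]

theorem enorm_kernelMean_smoothedNorm_le (hq1 : q < 1) (hq0 : q ≠ 0) (hδ0 : δ ≠ 0)
    (hδ1 : δ ≤ 1) {A : Set (Fin (n + 1) → X)} (hA : MeasurableSet A) :
    enorm (m2 P) (kernelMean κ fun x => smoothedNorm P κ q δ (sec A x)) q ≤
      smoothedNorm P κ q δ A := by
  rw [smoothedNorm_succ hq0 hA]
  exact enorm_mono fun y₀ => lintegral_enorm_le (measurable_smoothedProb_sec hA) hδ0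
    ENNReal.one_ne_top (fun z => le_smoothedProb hδ1 (measurableSet_sec hA z.1) z.2)
    (fun z => smoothedProb_le_one hδ1 (measurableSet_sec hA z.1) z.2) hq1 hq0

theorem smoothedNorm_le_enorm_kernelMean (hq : 1 ≤ q) (hδ1 : δ ≤ 1)
    {A : Set (Fin (n + 1) → X)} (hA : MeasurableSet A) :
    smoothedNorm P κ q δ A ≤
      enorm (m2 P) (kernelMean κ fun x => smoothedNorm P κ q δ (sec A x)) q := by
  rw [smoothedNorm_succ (by linarith) hA]
  refine enorm_mono fun y₀ => enorm_lintegral_le (measurable_smoothedProb_sec hA) hq ?_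
  have hmean : ∀ y, ∫⁻ x, smoothedProb κ δ (sec A x) y ∂κ y₀ ≤ 1 := fun y =>
    kernelMean_le κ (fun x => smoothedProb_le_one hδ1 (measurableSet_sec hA x) y) y₀
  exact ne_top_of_le_ne_top ENNReal.one_ne_top ((lintegral_mono fun y =>
    ENNReal.rpow_le_one (hmean y) (by linarith)).trans (by simp))

theorem tendsto_lintegral_smoothedProb_rpow (ν : Measure (Fin n → Y)) [IsFiniteMeasure ν]
    (hq : q ≠ 0) {u : ℕ → ℝ≥0∞} (hu : Antitone u) (hu1 : ∀ k, u k ≤ 1)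
    (hu0 : Tendsto u atTop (𝓝 0)) {A : Set (Fin n → X)} (hA : MeasurableSet A) :
    Tendsto (fun k => ∫⁻ y, smoothedProb κ (u k) A y ^ q ∂ν) atTop
      (𝓝 (∫⁻ y, kpi κ y A ^ q ∂ν)) := by
  have hmeas : ∀ k, Measurable fun y => smoothedProb κ (u k) A y ^ q := fun k =>
    (measurable_smoothedProb hA).pow_const q
  have hlim : ∀ y, Tendsto (fun k => smoothedProb κ (u k) A y ^ q) atTop
      (𝓝 (kpi κ y A ^ q)) := fun y => by
    have hprob : Tendsto (fun k => smoothedProb κ (u k) A y) atTop (𝓝 (kpi κ y A)) := by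
      simpa [smoothedProb] using tendsto_const_nhds.add
        (ENNReal.Tendsto.mul_const (b := kpi κ y Aᶜ) hu0 (.inr (measure_ne_top _ _)))
    exact (ENNReal.continuous_rpow_const.tendsto _).comp hprob
  rcases hq.lt_or_gt with hneg | hpos
  · refine lintegral_tendsto_of_tendsto_of_monotone (fun k => (hmeas k).aemeasurable)
      (Eventually.of_forall fun y i j hij => ennreal_rpow_le_rpow_of_neg hneg ?_)
      (Eventually.of_forall hlim)
    rw [smoothedProb, smoothedProb]
    gcongr
    exact hu hij
  · exact tendsto_lintegral_of_dominated_convergence (fun _ => 1) hmeas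
      (fun k => Eventually.of_forall fun y =>
        ENNReal.rpow_le_one (smoothedProb_le_one (hu1 k) hA y) hpos.le)
      (by simp) (Eventually.of_forall hlim)

theorem le_enorm_kpi_of_le_smoothedNorm (hq : q ≠ 0) {A : Set (Fin n → X)}
    (hA : MeasurableSet A) {c : ℝ≥0∞}
    (hc : ∀ δ, δ ≠ 0 → δ ≤ 1 → c ≤ smoothedNorm P κ q δ A) :
    c ≤ enorm (piM n (m2 P)) (fun y => kpi κ y A) q := by
  obtain ⟨u, hanti, hu, hlim⟩ := exists_seq_strictAnti_tendsto' (zero_lt_one (α := ℝ≥0∞))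
  exact ge_of_tendsto' ((ENNReal.continuous_rpow_const.tendsto _).comp
    (tendsto_lintegral_smoothedProb_rpow (piM n (m2 P)) hq hanti.antitone
      (fun k => (hu k).2.le) hlim hA)) fun k => hc (u k) (hu k).1.ne' (hu k).2.le

end Smoothing

section Increments

variable {n : ℕ} {P : Measure (X × Y)} [IsProbabilityMeasure P] {κ : Kernel Y X}
  [IsMarkovKernel κ] {δ : ℝ≥0∞} {q : ℝ}

/-- The measurable sets of sequences charged by `μ^{⊗n}`. -/
def chargedSets (μ : Measure X) (n : ℕ) : Set (Set (Fin n → X)) :=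
  {A | MeasurableSet A ∧ piM n μ A ≠ 0}

/-- The surprisals of `A` under `P_X^{⊗n}` and in the smoothed `q`-norm. Divided by `n`, these are
the two exponents compared by the stability bounds. -/
def exponents (P : Measure (X × Y)) (κ : Kernel Y X) (q : ℝ) (δ : ℝ≥0∞) (A : Set (Fin n → X)) :
    ℝ × ℝ :=
  (negLog (piM n (m1 P) A), negLog (smoothedNorm P κ q δ A))

theorem exponents_of_mem_chargedSets_zero (hq : q ≠ 0) {A : Set (Fin 0 → X)}
    (hA : A ∈ chargedSets (m1 P) 0) : exponents P κ q δ A = 0 := by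
  obtain rfl : A = Set.univ := Subsingleton.eq_univ_of_nonempty (nonempty_of_measure_ne_zero hA.2)
  have huniv : smoothedProb κ δ (Set.univ : Set (Fin 0 → X)) = fun _ => 1 :=
    funext smoothedProb_univ
  simp [exponents, smoothedNorm, huniv, enorm_const, hq]

theorem KL_reweighted_piM_sec (μ : Measure X) [IsProbabilityMeasure μ]
    {A : Set (Fin (n + 1) → X)} (hA : A ∈ chargedSets μ (n + 1)) :
    KL (reweighted μ fun x => piM n μ (sec A x)) μ = ((negLog (piM (n + 1) μ A) -
      ∫ x, negLog (piM n μ (sec A x)) ∂reweighted μ fun x => piM n μ (sec A x) : ℝ) : EReal) := by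
  have hmass := piM_succ_apply μ hA.1
  rw [KL_reweighted (measurable_piM_sec μ hA.1) (hmass ▸ hA.2) ENNReal.one_ne_top
    (Eventually.of_forall fun x => prob_le_one) (hmass ▸ measure_ne_top _ _), hmass]

theorem exists_exponents_increment_mem_hypograph (hκ : IsCondKernel P κ) (hδ0 : δ ≠ 0)
    (hδ1 : δ ≤ 1) (hq1 : q < 1) (hq0 : q ≠ 0) {A : Set (Fin (n + 1) → X)}
    (hA : A ∈ chargedSets (m1 P) (n + 1)) :
    ∃ Q : Measure X, IsProbabilityMeasure Q ∧ (∀ᵐ x ∂Q, sec A x ∈ chargedSets (m1 P) n) ∧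
      Integrable (fun x => exponents P κ q δ (sec A x)) Q ∧
      exponents P κ q δ A - ∫ x, exponents P κ q δ (sec A x) ∂Q ∈
        hypograph (phiLT1 P (q / (q - 1))) := by
  have hmass := piM_succ_apply (m1 P) hA.1
  have hpm := measurable_piM_sec (m1 P) hA.1
  have hmass0 : ∫⁻ x, piM n (m1 P) (sec A x) ∂m1 P ≠ 0 := hmass ▸ hA.2
  have hδg : ∀ x, δ ≤ smoothedNorm P κ q δ (sec A x) := fun x =>
    le_smoothedNorm hq0 hδ1 (measurableSet_sec hA.1 x)
  have hg1 : ∀ x, smoothedNorm P κ q δ (sec A x) ≤ 1 := fun x =>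
    smoothedNorm_le_one hq0 hδ1 (measurableSet_sec hA.1 x)
  have hQ := isProbabilityMeasure_reweighted hpm hmass0 (hmass ▸ measure_ne_top _ _)
  have hKL := KL_reweighted_piM_sec (m1 P) hA
  have hp_int := integrable_negLog_reweighted hpm hmass0 ENNReal.one_ne_top
    (Eventually.of_forall fun x => prob_le_one)
  have hg_int := integrable_negLog (Q := reweighted (m1 P) fun x => piM n (m1 P) (sec A x))
    (measurable_smoothedNorm_sec hA.1) hδ0 (Eventually.of_forall hδg) (Eventually.of_forall hg1)
  refine ⟨_, hQ, (ae_reweighted_ne_zero hpm).mono fun x hx => ⟨measurableSet_sec hA.1 x, hx⟩,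
    hp_int.prodMk hg_int, ?_⟩
  have hnorm : negLog (smoothedNorm P κ q δ A) ≤ negLog
      (enorm (m2 P) (kernelMean κ fun x => smoothedNorm P κ q δ (sec A x)) q) :=
    negLog_le_negLog (hδ0.bot_lt.trans_le (le_enorm hq0 (le_kernelMean κ hδg))).ne'
      (ne_top_of_le_ne_top ENNReal.one_ne_top (smoothedNorm_le_one hq0 hδ1 hA.1))
      (enorm_kernelMean_smoothedNorm_le hq1 hq0 hδ0 hδ1 hA.1)
  simp only [exponents, integral_pair hp_int hg_int, Prod.mk_sub_mk]
  exact ⟨KL_nonneg hKL, (EReal.coe_le_coe_iff.2 (sub_le_sub_right hnorm _)).trans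
    (coe_sub_le_phiLT1 hκ (measurable_smoothedNorm_sec hA.1) hδ0 hδg hg1 hq1 hq0 hKL)⟩

theorem smoothedNorm_zero_rpow_le (hκ : IsCondKernel P κ) (hq : 1 ≤ q) {A : Set (Fin n → X)}
    (hA : MeasurableSet A) : smoothedNorm P κ q 0 A ^ q ≤ piM n (m1 P) A := by
  rw [smoothedNorm, enorm_rpow_self (by linarith), piM_m1_apply hκ hA]
  refine lintegral_mono fun y => ?_
  simpa [smoothedProb_zero] using ENNReal.rpow_le_rpow_of_exponent_ge (prob_le_one (μ := kpi κ y)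
    (s := A)) hq

theorem smoothedNorm_zero_ne_zero (hκ : IsCondKernel P κ) (hq : 0 < q) {A : Set (Fin n → X)}
    (hA : A ∈ chargedSets (m1 P) n) : smoothedNorm P κ q 0 A ≠ 0 := fun h => by
  have hint : ∫⁻ y, smoothedProb κ 0 A y ^ q ∂piM n (m2 P) = 0 := by
    rw [← enorm_rpow_self hq.ne', ← smoothedNorm, h, ENNReal.zero_rpow_of_pos hq]
  rw [lintegral_eq_zero_iff ((measurable_smoothedProb hA.1).pow_const q)] at hint
  refine hA.2 ?_
  rw [piM_m1_apply hκ hA.1, lintegral_eq_zero_iff (measurable_kpi κ hA.1)]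
  exact hint.mono fun y hy => by simpa [smoothedProb_zero, hq, hq.not_gt] using hy

theorem exists_exponents_increment_mem_leftEpigraph (hκ : IsCondKernel P κ) (hq : 1 ≤ q)
    {A : Set (Fin (n + 1) → X)} (hA : A ∈ chargedSets (m1 P) (n + 1)) :
    ∃ Q : Measure X, IsProbabilityMeasure Q ∧ (∀ᵐ x ∂Q, sec A x ∈ chargedSets (m1 P) n) ∧
      Integrable (fun x => exponents P κ q 0 (sec A x)) Q ∧
      exponents P κ q 0 A - ∫ x, exponents P κ q 0 (sec A x) ∂Q ∈
        leftEpigraph (phiRinf P (conj q)) := by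
  have hq0 : 0 < q := by linarith
  have hgm : Measurable fun x => smoothedNorm P κ q 0 (sec A x) := measurable_smoothedNorm_sec hA.1
  have hg1 : ∀ x, smoothedNorm P κ q 0 (sec A x) ≤ 1 := fun x =>
    smoothedNorm_le_one hq0.ne' zero_le_one (measurableSet_sec hA.1 x)
  have hnorm := smoothedNorm_le_enorm_kernelMean (P := P) (κ := κ) hq zero_le_one hA.1
  have hnorm0 := smoothedNorm_zero_ne_zero hκ hq0 hA
  obtain ⟨Q, s, hQ, hKL, hg0, hg_int, hphi⟩ := exists_phiRinf_le hκ hgm hg1 hq fun h =>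
    hnorm0 (le_bot_iff.1 (hnorm.trans (by simp [enorm, h, hq0])))
  have hgp : ∀ x, smoothedNorm P κ q 0 (sec A x) ^ q ≤ piM n (m1 P) (sec A x) := fun x =>
    smoothedNorm_zero_rpow_le hκ hq (measurableSet_sec hA.1 x)
  have hgq0 : ∀ᵐ x ∂Q, smoothedNorm P κ q 0 (sec A x) ^ q ≠ 0 := hg0.mono fun x hx => by
    simp [hx, hq0, hq0.not_gt]
  have hp0 : ∀ᵐ x ∂Q, piM n (m1 P) (sec A x) ≠ 0 := hgq0.mono fun x hx =>
    (hx.bot_lt.trans_le (hgp x)).ne'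
  have hp_int : Integrable (fun x => negLog (piM n (m1 P) (sec A x))) Q := by
    refine (hg_int.const_mul q).mono'
      (measurable_negLog.comp (measurable_piM_sec (m1 P) hA.1)).aestronglyMeasurable ?_
    filter_upwards [hgq0] with x hx
    rw [Real.norm_of_nonneg (negLog_nonneg prob_le_one), ← negLog_rpow]
    exact negLog_le_negLog hx (measure_ne_top _ _) (hgp x)
  have hDV := negLog_lintegral_le hKL (measurable_piM_sec (m1 P) hA.1) hp0
    (piM_succ_apply (m1 P) hA.1 ▸ measure_ne_top _ _) hp_int
  refine ⟨Q, hQ, hp0.mono fun x hx => ⟨measurableSet_sec hA.1 x, hx⟩, hp_int.prodMk hg_int, ?_⟩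
  simp only [exponents, integral_pair hp_int hg_int, Prod.mk_sub_mk]
  refine ⟨s, ?_, KL_nonneg hKL, hphi.trans (EReal.coe_le_coe_iff.2 (sub_le_sub_right ?_ _))⟩
  · rw [sub_le_iff_le_add, piM_succ_apply (m1 P) hA.1]
    exact hDV
  · exact negLog_le_negLog hnorm0 (ne_top_of_le_ne_top ENNReal.one_ne_top
      (enorm_le hq0.ne' (kernelMean_le κ hg1))) hnorm

theorem coe_inv_mul_negLog_smoothedNorm_le_uce1 (hκ : IsCondKernel P κ) (hδ0 : δ ≠ 0)
    (hδ1 : δ ≤ 1) (hq1 : q < 1) (hq0 : q ≠ 0) (hn : n ≠ 0) {A : Set (Fin n → X)}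
    (hA : A ∈ chargedSets (m1 P) n) :
    (((n : ℝ)⁻¹ * negLog (smoothedNorm P κ q δ A) : ℝ) : EReal) ≤
      uce1 (phiLT1 P (q / (q - 1))) ((n : ℝ)⁻¹ * negLog (piM n (m1 P) A)) :=
  le_uce1_of_mem_convexHull_hypograph <| inv_smul_mem_convexHull_of_sections
    (Φ := fun _ => exponents P κ q δ) (fun _ => exponents_of_mem_chargedSets_zero hq0)
    (fun _ _ => exists_exponents_increment_mem_hypograph hκ hδ0 hδ1 hq1 hq0) hn hA

theorem ThetaGe1_le_coe_inv_mul_negLog_smoothedNorm (hκ : IsCondKernel P κ) (hq : 1 ≤ q)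
    (hn : n ≠ 0) {A : Set (Fin n → X)} (hA : A ∈ chargedSets (m1 P) n) :
    ThetaGe1 P (conj q) ((n : ℝ)⁻¹ * negLog (piM n (m1 P) A)) ≤
      (((n : ℝ)⁻¹ * negLog (smoothedNorm P κ q 0 A) : ℝ) : EReal) :=
  iInf_lce1_le_of_mem_convexHull_leftEpigraph <| inv_smul_mem_convexHull_of_sections
    (Φ := fun _ => exponents P κ q 0) (fun _ => exponents_of_mem_chargedSets_zero (by linarith))
    (fun _ _ => exists_exponents_increment_mem_leftEpigraph hκ hq) hn hA

end Increments

section Assembly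

theorem neg_mul_elog {x : ℝ≥0∞} (h0 : x ≠ 0) (ht : x ≠ ⊤) (c : ℝ) :
    -((c : EReal) * elog x) = ((c * negLog x : ℝ) : EReal) := by
  rw [elog, if_neg h0, if_neg ht, ← EReal.coe_mul, ← EReal.coe_neg, negLog, mul_neg]

theorem ofReal_exp_neg_le_iff {x : ℝ≥0∞} (h0 : x ≠ 0) (ht : x ≠ ⊤) {c : ℝ} :
    ENNReal.ofReal (Real.exp (-c)) ≤ x ↔ negLog x ≤ c := by
  rw [ENNReal.ofReal_le_iff_le_toReal ht, ← Real.le_log_iff_exp_le (ENNReal.toReal_pos h0 ht),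
    negLog, neg_le]

variable {n : ℕ} {P : Measure (X × Y)} [IsProbabilityMeasure P] {κ : Kernel Y X}
  [IsMarkovKernel κ] {q : ℝ} {A : Set (Fin n → X)}

theorem ThetaGe1_le_neg_elog_enorm_kpi (hκ : IsCondKernel P κ) (hq : 1 ≤ q) (hn : n ≠ 0)
    (hA : A ∈ chargedSets (m1 P) n) :
    ThetaGe1 P (conj q) ((n : ℝ)⁻¹ * negLog (piM n (m1 P) A)) ≤
      -((((n : ℝ)⁻¹ : ℝ) : EReal) * elog (enorm (piM n (m2 P)) (fun y => kpi κ y A) q)) := by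
  have hq0 : 0 < q := by linarith
  have henorm : enorm (piM n (m2 P)) (fun y => kpi κ y A) q = smoothedNorm P κ q 0 A := by
    simp only [smoothedNorm, enorm, smoothedProb_zero]
  rw [henorm, neg_mul_elog (smoothedNorm_zero_ne_zero hκ hq0 hA)
    (ne_top_of_le_ne_top ENNReal.one_ne_top (smoothedNorm_le_one hq0.ne' zero_le_one hA.1))]
  exact ThetaGe1_le_coe_inv_mul_negLog_smoothedNorm hκ hq hn hA

theorem neg_elog_enorm_kpi_le_uce1 (hκ : IsCondKernel P κ) (hq1 : q < 1) (hq0 : q ≠ 0)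
    (hn : n ≠ 0) (hA : A ∈ chargedSets (m1 P) n) :
    -((((n : ℝ)⁻¹ : ℝ) : EReal) * elog (enorm (piM n (m2 P)) (fun y => kpi κ y A) q)) ≤
      uce1 (phiLT1 P (q / (q - 1))) ((n : ℝ)⁻¹ * negLog (piM n (m1 P) A)) := by
  have hU := fun δ (hδ0 : δ ≠ 0) (hδ1 : δ ≤ 1) =>
    coe_inv_mul_negLog_smoothedNorm_le_uce1 (P := P) hκ hδ0 hδ1 hq1 hq0 hn hA
  generalize uce1 (phiLT1 P (q / (q - 1))) ((n : ℝ)⁻¹ * negLog (piM n (m1 P) A)) = U at hU ⊢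
  induction U with
  | bot => exact absurd (le_bot_iff.1 (hU 1 one_ne_zero le_rfl)) (EReal.coe_ne_bot _)
  | top => exact le_top
  | coe u =>
    have hn0 : (0 : ℝ) < n := by positivity
    have hexp : ENNReal.ofReal (Real.exp (-(n * u))) ≤
        enorm (piM n (m2 P)) (fun y => kpi κ y A) q := by
      refine le_enorm_kpi_of_le_smoothedNorm hq0 hA.1 fun δ hδ0 hδ1 => ?_
      rw [ofReal_exp_neg_le_iff (hδ0.bot_lt.trans_le (le_smoothedNorm hq0 hδ1 hA.1)).ne'
        (ne_top_of_le_ne_top ENNReal.one_ne_top (smoothedNorm_le_one hq0 hδ1 hA.1)),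
        ← inv_mul_le_iff₀ hn0]
      exact EReal.coe_le_coe_iff.1 (hU δ hδ0 hδ1)
    have henorm0 : enorm (piM n (m2 P)) (fun y => kpi κ y A) q ≠ 0 :=
      ((ENNReal.ofReal_pos.2 (Real.exp_pos _)).trans_le hexp).ne'
    have henorm_top : enorm (piM n (m2 P)) (fun y => kpi κ y A) q ≠ ⊤ :=
      ne_top_of_le_ne_top ENNReal.one_ne_top (enorm_le hq0 fun y => prob_le_one)
    rw [neg_mul_elog henorm0 henorm_top, EReal.coe_le_coe_iff, inv_mul_le_iff₀ hn0]
    exact (ofReal_exp_neg_le_iff henorm0 henorm_top).1 hexp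

theorem enorm_kpi_eq_one (hκ : IsCondKernel P κ) (hq : q ≠ 0) (hA : MeasurableSet A)
    (hA1 : piM n (m1 P) A = 1) : enorm (piM n (m2 P)) (fun y => kpi κ y A) q = 1 := by
  have hcompl : ∫⁻ y, kpi κ y Aᶜ ∂piM n (m2 P) = 0 := by
    rw [← piM_m1_apply hκ hA.compl, prob_compl_eq_zero_iff hA, hA1]
  have hae : (fun y => kpi κ y A) =ᵐ[piM n (m2 P)] fun _ => 1 := by
    rw [lintegral_eq_zero_iff (measurable_kpi κ hA.compl)] at hcompl
    exact hcompl.mono fun y hy => (prob_compl_eq_zero_iff hA).1 hy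
  calc enorm (piM n (m2 P)) (fun y => kpi κ y A) q = enorm (piM n (m2 P)) (fun _ => 1) q :=
        congrArg (· ^ (1 / q)) (lintegral_congr_ae (hae.fun_comp (· ^ q)))
    _ = 1 := enorm_const 1 hq

end Assembly

theorem statement13_general (P : Measure (X × Y)) [IsProbabilityMeasure P]
    (κ : Kernel Y X) [IsMarkovKernel κ] (hκ : IsCondKernel P κ) (n : ℕ) (hn : 1 ≤ n)
    (A : Set (Fin n → X)) (hA : MeasurableSet A)
    (α : ℝ) (hαA : piM n (m1 P) A = ENNReal.ofReal (Real.exp (-((n : ℝ) * α)))) :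
    (∀ q : ℝ, 1 ≤ q →
      ThetaGe1 P (conj q) α ≤
        -((((n : ℝ)⁻¹ : ℝ) : EReal) *
          elog (enorm (piM n (m2 P)) (fun y => kpi κ y A) q))) ∧
    (∀ q : ℝ, q < 1 → q ≠ 0 →
      -((((n : ℝ)⁻¹ : ℝ) : EReal) *
          elog (enorm (piM n (m2 P)) (fun y => kpi κ y A) q)) ≤
        uce1 (phiLT1 P (q / (q - 1))) α ∧
      (α = 0 →
        -((((n : ℝ)⁻¹ : ℝ) : EReal) *
            elog (enorm (piM n (m2 P)) (fun y => kpi κ y A) q)) ≤ (0 : EReal))) := by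
  have hn0 : n ≠ 0 := by lia
  have hcharged : A ∈ chargedSets (m1 P) n := ⟨hA, by simp [hαA, Real.exp_pos]⟩
  obtain rfl : α = (n : ℝ)⁻¹ * negLog (piM n (m1 P) A) := by
    rw [hαA, negLog, ENNReal.toReal_ofReal (Real.exp_nonneg _), Real.log_exp]
    field_simp
  refine ⟨fun q hq => ThetaGe1_le_neg_elog_enorm_kpi hκ hq hn0 hcharged, fun q hq1 hq0 =>
    ⟨neg_elog_enorm_kpi_le_uce1 hκ hq1 hq0 hn0 hcharged, fun hα => ?_⟩⟩
  have hA1 : piM n (m1 P) A = 1 := by rw [hαA, hα]; simp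
  rw [enorm_kpi_eq_one hκ hq0 hA hA1, neg_mul_elog one_ne_zero ENNReal.one_ne_top]
  simp

/-- Pointwise strong q-stability bounds; Theorem `thm:strongsse-2-1`. -/
theorem statement13 [TopologicalSpace X] [PolishSpace X] [BorelSpace X]
    [TopologicalSpace Y] [PolishSpace Y] [BorelSpace Y]
    (P : Measure (X × Y)) [IsProbabilityMeasure P]
    (hndX : ∀ x : X, m1 P ≠ Measure.dirac x) (hndY : ∀ y : Y, m2 P ≠ Measure.dirac y)
    (κ : Kernel Y X) [IsMarkovKernel κ] (hκ : IsCondKernel P κ)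
    (n : ℕ) (hn : 1 ≤ n)
    (A : Set (Fin n → X)) (hA : MeasurableSet A)
    (α : ℝ) (hαA : piM n (m1 P) A = ENNReal.ofReal (Real.exp (-((n : ℝ) * α)))) :
    (∀ q : ℝ, 1 ≤ q →
      ThetaGe1 P (conj q) α ≤
        -((((n : ℝ)⁻¹ : ℝ) : EReal) *
          elog (enorm (piM n (m2 P)) (fun y => kpi κ y A) q))) ∧
    (∀ q : ℝ, q < 1 → q ≠ 0 →
      (0 < α →
        -((((n : ℝ)⁻¹ : ℝ) : EReal) *
            elog (enorm (piM n (m2 P)) (fun y => kpi κ y A) q)) ≤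
          uce1 (phiLT1 P (q / (q - 1))) α) ∧
      (α = 0 →
        -((((n : ℝ)⁻¹ : ℝ) : EReal) *
            elog (enorm (piM n (m2 P)) (fun y => kpi κ y A) q)) ≤ (0 : EReal))) :=
  (statement13_general P κ hκ n hn A hA α hαA).imp_right fun h q hq1 hq0 =>
    (h q hq1 hq0).imp_left fun hle _ => hle

end BL
end
end

section
/- Minimax equality for bilinear expectations on finite × Polish spaces: let 𝒳 be a finite set, 𝒴 a Polish space, a ∈ ℝ, b : 𝒳 × 𝒴 → [a, +∞] a measurable extended-real-valued function, and B a nonempty convex subset of the set of Borel probability measures on 𝒴. Define g(Q_X, Q_Y) := E_{(X,Y) ∼ Q_X ⊗ Q_Y}[b(X,Y)] for probability measures Q_X on 𝒳 and Q_Y ∈ B. Then min over Q_X of sup over Q_Y ∈ B of g(Q_X, Q_Y) equals sup over Q_Y ∈ B of min over Q_X of g(Q_X, Q_Y). -/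
open MeasureTheory ProbabilityTheory Set Filter
open scoped ENNReal NNReal BigOperators Classical Topology

noncomputable section

namespace BL

variable {X : Type*} {Y : Type*} [MeasurableSpace X] [MeasurableSpace Y]

/-! ### Definitions for Statement 16 -/

/-- Truncation `EReal → ℝ≥0∞` (negatives to `0`, `⊤` to `⊤`). -/
def er2en (x : EReal) : ℝ≥0∞ := if x = ⊤ then ⊤ else ENNReal.ofReal x.toReal

/-- The bilinear expectation `g(Q_X,Q_Y) = E_{Q_X ⊗ Q_Y}[b]`, for `b` valued in `[a,∞]`,
written as `a + E[b - a]` (valued in `[a,∞]`). -/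
def bilin [Fintype X] (a : ℝ) (b : X × Y → EReal) (QX : Measure X) (QY : Measure Y) :
    EReal :=
  (a : EReal) +
    ((∑ x : X, QX {x} * ∫⁻ y, er2en (b (x, y) - (a : EReal)) ∂QY : ℝ≥0∞) : EReal)

/-! The expectation depends on `Q_Y` only through the vector `u x = ∫ (b (x, ·) - a) ∂Q_Y`. These
vectors form a convex set in `[0, ∞]^X`, and the expectation is bilinear in `(Q_X, u)`. Sion's
theorem does not apply in `[0, ∞]^X`, which is not a vector space and where `0 * ∞ = 0` makes the
expectation discontinuous in `Q_X`. It is applied instead to the real vectors below some `u`, paired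
with the compact simplex: passing to them does not change the suprema, because `u` is the monotone
limit of its truncations `min (u x) n`, and the set of such vectors is still convex. -/

section Minimax

variable {β : Type*} [CompleteLinearOrder β] [TopologicalSpace β] [OrderTopology β]

theorem iInf₂_iSup₂_monotone_bilinear [DenselyOrdered β] {E F : Type*}
    [AddCommGroup E] [Module ℝ E] [TopologicalSpace E] [IsTopologicalAddGroup E]
    [ContinuousSMul ℝ E]
    [AddCommGroup F] [Module ℝ F] [TopologicalSpace F] [IsTopologicalAddGroup F]
    [ContinuousSMul ℝ F]
    (L : E →ₗ[ℝ] F →ₗ[ℝ] ℝ) (hL₁ : ∀ d, Continuous (L.flip d)) (hL₂ : ∀ q, Continuous (L q))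
    {φ : ℝ → β} (hφ : Continuous φ) (hφm : Monotone φ)
    {K : Set E} (hKne : K.Nonempty) (hKcv : Convex ℝ K) (hKcpt : IsCompact K)
    {D : Set F} (hD : Convex ℝ D) :
    ⨅ q ∈ K, ⨆ d ∈ D, φ (L q d) = ⨆ d ∈ D, ⨅ q ∈ K, φ (L q d) :=
  Sion.minimax' hKne hKcv hKcpt
    (fun d _ => (hφ.comp (hL₁ d)).lowerSemicontinuous.lowerSemicontinuousOn K)
    (fun d _ => ((L.flip d).convexOn hKcv).quasiconvexOn.monotone_comp hφm)
    hD
    (fun q _ => (hφ.comp (hL₂ q)).upperSemicontinuous.upperSemicontinuousOn D)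
    (fun q _ => ((L q).concaveOn hD).quasiconcaveOn.monotone_comp hφm)

variable {ι : Type*}

/-- The real vectors lying below some element of `C`: a stand-in for `C` inside a topological vector
space. Coordinates are truncated at `0` before comparison, so negative entries are allowed. -/
def realMinorants (C : Set (ι → ℝ≥0∞)) : Set (ι → ℝ) :=
  {d | ∃ u ∈ C, ∀ i, ENNReal.ofReal (d i) ≤ u i}

lemma convex_realMinorants {C : Set (ι → ℝ≥0∞)} (hC : Convex ℝ≥0 C) :
    Convex ℝ (realMinorants C) := by
  rintro d ⟨u, hu, hdu⟩ e ⟨v, hv, hev⟩ s t hs ht hst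
  lift s to ℝ≥0 using hs
  lift t to ℝ≥0 using ht
  refine ⟨_, hC hu hv s.2 t.2 (by exact_mod_cast hst), fun i => ?_⟩
  calc ENNReal.ofReal (s * d i + t * e i)
      ≤ ENNReal.ofReal (s * d i) + ENNReal.ofReal (t * e i) := ENNReal.ofReal_add_le
    _ = s * ENNReal.ofReal (d i) + t * ENNReal.ofReal (e i) := by
        simp only [ENNReal.ofReal_mul NNReal.zero_le_coe, ENNReal.ofReal_coe_nnreal]
    _ ≤ s * u i + t * v i := by
        gcongr
        exacts [hdu i, hev i]

variable [Fintype ι]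

lemma ofReal_dotProduct_le {q d : ι → ℝ} (hq : 0 ≤ q) :
    ENNReal.ofReal (q ⬝ᵥ d) ≤ ∑ i, ENNReal.ofReal (q i) * ENNReal.ofReal (d i) := by
  refine (Finset.le_sum_of_subadditive _ ENNReal.ofReal_zero.le
    (fun _ _ => ENNReal.ofReal_add_le) _ _).trans_eq ?_
  exact Finset.sum_congr rfl fun i _ => ENNReal.ofReal_mul (hq i)

lemma sum_mul_eq_iSup_sum_mul_min (p u : ι → ℝ≥0∞) :
    ∑ i, p i * u i = ⨆ n : ℕ, ∑ i, p i * min (u i) n := by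
  have hmin (i : ι) : u i = ⨆ n : ℕ, min (u i) n := by
    rw [← inf_iSup_eq, ENNReal.iSup_natCast, inf_top_eq]
  rw [← ENNReal.finsetSum_iSup_of_monotone fun i m n hmn => by gcongr]
  simp_rw [← ENNReal.mul_iSup, ← hmin]

lemma ofReal_dotProduct_toReal {q : ι → ℝ} (hq : 0 ≤ q) {u : ι → ℝ≥0∞} (hu : ∀ i, u i ≠ ∞) :
    ENNReal.ofReal (q ⬝ᵥ fun i => (u i).toReal) = ∑ i, ENNReal.ofReal (q i) * u i := by
  rw [dotProduct, ENNReal.ofReal_sum_of_nonneg fun i _ => mul_nonneg (hq i) ENNReal.toReal_nonneg]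
  refine Finset.sum_congr rfl fun i _ => ?_
  rw [ENNReal.ofReal_mul (hq i), ENNReal.ofReal_toReal (hu i)]

lemma map_sum_mul_le_iSup_realMinorants {ψ : ℝ≥0∞ → β} (hψ : Continuous ψ) (hψm : Monotone ψ)
    {C : Set (ι → ℝ≥0∞)} {u : ι → ℝ≥0∞} (hu : u ∈ C) {q : ι → ℝ} (hq : 0 ≤ q) :
    ψ (∑ i, ENNReal.ofReal (q i) * u i) ≤
      ⨆ d ∈ realMinorants C, ψ (ENNReal.ofReal (q ⬝ᵥ d)) := by
  rw [sum_mul_eq_iSup_sum_mul_min, hψm.map_ciSup_of_continuousAt hψ.continuousAt]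
  refine iSup_le fun n => ?_
  have hfin (i : ι) : min (u i) n ≠ ∞ := (inf_le_right.trans_lt (ENNReal.natCast_lt_top n)).ne
  rw [← ofReal_dotProduct_toReal hq hfin]
  exact le_iSup₂_of_le _ ⟨u, hu, fun i => ENNReal.ofReal_toReal_le.trans inf_le_left⟩ le_rfl

theorem iInf_stdSimplex_iSup_map_sum_mul [DenselyOrdered β]
    {ψ : ℝ≥0∞ → β} (hψ : Continuous ψ) (hψm : Monotone ψ)
    {C : Set (ι → ℝ≥0∞)} (hCne : C.Nonempty) (hC : Convex ℝ≥0 C) :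
    ⨅ q ∈ stdSimplex ℝ ι, ⨆ u ∈ C, ψ (∑ i, ENNReal.ofReal (q i) * u i) =
      ⨆ u ∈ C, ⨅ q ∈ stdSimplex ℝ ι, ψ (∑ i, ENNReal.ofReal (q i) * u i) := by
  refine le_antisymm ?_ (iSup₂_iInf₂_le_iInf₂_iSup₂ _ _ _)
  cases isEmpty_or_nonempty ι with
  | inl _ =>
    obtain ⟨u, hu⟩ := hCne
    exact le_iSup₂_of_le u hu (by simp [stdSimplex_of_isEmpty_index])
  | inr _ =>
    calc ⨅ q ∈ stdSimplex ℝ ι, ⨆ u ∈ C, ψ (∑ i, ENNReal.ofReal (q i) * u i)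
        ≤ ⨅ q ∈ stdSimplex ℝ ι, ⨆ d ∈ realMinorants C, ψ (ENNReal.ofReal (q ⬝ᵥ d)) :=
          iInf₂_mono fun q hq => iSup₂_le fun u hu =>
            map_sum_mul_le_iSup_realMinorants hψ hψm hu hq.1
      _ = ⨆ d ∈ realMinorants C, ⨅ q ∈ stdSimplex ℝ ι, ψ (ENNReal.ofReal (q ⬝ᵥ d)) :=
          iInf₂_iSup₂_monotone_bilinear (dotProductBilin ℝ ℝ)
            (fun d => LinearMap.continuous_of_finiteDimensional _)
            (fun q => LinearMap.continuous_of_finiteDimensional _)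
            (hψ.comp ENNReal.continuous_ofReal) (hψm.comp ENNReal.ofReal_mono)
            ⟨_, single_mem_stdSimplex ℝ (Classical.arbitrary ι)⟩
            (convex_stdSimplex ℝ ι) (isCompact_stdSimplex ℝ ι) (convex_realMinorants hC)
      _ ≤ ⨆ u ∈ C, ⨅ q ∈ stdSimplex ℝ ι, ψ (∑ i, ENNReal.ofReal (q i) * u i) := by
          refine iSup₂_le fun d ⟨u, hu, hdu⟩ => le_iSup₂_of_le u hu ?_
          refine iInf₂_mono fun q hq => hψm ((ofReal_dotProduct_le hq.1).trans ?_)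
          gcongr with i
          exact hdu i

end Minimax

lemma exists_isProbabilityMeasure_singleton_eq [Fintype X] [MeasurableSingletonClass X]
    {q : X → ℝ} (hq : q ∈ stdSimplex ℝ X) :
    ∃ Q : Measure X, IsProbabilityMeasure Q ∧ ∀ x, Q {x} = ENNReal.ofReal (q x) := by
  have hsum : ∑ x, ENNReal.ofReal (q x) = 1 := by
    rw [← ENNReal.ofReal_sum_of_nonneg fun x _ => hq.1 x, hq.2, ENNReal.ofReal_one]
  refine ⟨(PMF.ofFintype _ hsum).toMeasure, inferInstance, fun x => ?_⟩
  rw [PMF.toMeasure_apply_singleton _ _ (measurableSet_singleton x), PMF.ofFintype_apply]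

lemma real_singleton_mem_stdSimplex [Fintype X] [MeasurableSingletonClass X]
    (Q : Measure X) [IsProbabilityMeasure Q] : (fun x => Q.real {x}) ∈ stdSimplex ℝ X :=
  ⟨fun _ => measureReal_nonneg, by
    rw [sum_measureReal_singleton, Finset.coe_univ, probReal_univ]⟩

lemma iInf_isProbabilityMeasure_eq_iInf_stdSimplex [Fintype X] [MeasurableSingletonClass X]
    {β : Type*} [CompleteLattice β] (G : (X → ℝ≥0∞) → β) :
    ⨅ (Q : Measure X) (_ : IsProbabilityMeasure Q), G (fun x => Q {x}) =
      ⨅ q ∈ stdSimplex ℝ X, G (fun x => ENNReal.ofReal (q x)) := by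
  refine le_antisymm (le_iInf₂ fun q hq => ?_) (le_iInf₂ fun Q hQ => ?_)
  · obtain ⟨Q, hQ, hQq⟩ := exists_isProbabilityMeasure_singleton_eq hq
    exact iInf₂_le_of_le Q hQ (by simp only [hQq, le_refl])
  · refine iInf₂_le_of_le _ (real_singleton_mem_stdSimplex Q) ?_
    have hQx (x : X) : ENNReal.ofReal (Q.real {x}) = Q {x} := ofReal_measureReal
    simp only [hQx, le_refl]

lemma convex_image_lintegral {ι : Type*} (c : ι → Y → ℝ≥0∞) {B : Set (Measure Y)}
    (hB : Convex ℝ≥0 B) : Convex ℝ≥0 ((fun ν i => ∫⁻ y, c i y ∂ν) '' B) := by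
  rintro _ ⟨μ, hμ, rfl⟩ _ ⟨ν, hν, rfl⟩ s t hs ht hst
  refine ⟨_, hB hμ hν hs ht hst, ?_⟩
  ext i
  simp [lintegral_add_measure, lintegral_smul_measure]

theorem statement16_general [Fintype X] [MeasurableSingletonClass X]
    {β : Type*} [CompleteLinearOrder β] [DenselyOrdered β] [TopologicalSpace β] [OrderTopology β]
    {ψ : ℝ≥0∞ → β} (hψ : Continuous ψ) (hψm : Monotone ψ) (c : X → Y → ℝ≥0∞)
    {B : Set (Measure Y)} (hBne : B.Nonempty) (hB : Convex ℝ≥0 B) :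
    ⨅ (Q : Measure X) (_ : IsProbabilityMeasure Q),
        ⨆ ν ∈ B, ψ (∑ x, Q {x} * ∫⁻ y, c x y ∂ν) =
      ⨆ ν ∈ B, ⨅ (Q : Measure X) (_ : IsProbabilityMeasure Q),
        ψ (∑ x, Q {x} * ∫⁻ y, c x y ∂ν) := by
  have key := iInf_stdSimplex_iSup_map_sum_mul hψ hψm (hBne.image _) (convex_image_lintegral c hB)
  simp only [iSup_image] at key
  rw [iInf_isProbabilityMeasure_eq_iInf_stdSimplex
    fun p => ⨆ ν ∈ B, ψ (∑ x, p x * ∫⁻ y, c x y ∂ν), key]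
  exact iSup_congr fun ν => iSup_congr fun _ => (iInf_isProbabilityMeasure_eq_iInf_stdSimplex
    fun p => ψ (∑ x, p x * ∫⁻ y, c x y ∂ν)).symm

lemma convex_nnreal_of_forall_ofReal {M : Type*} [AddCommMonoid M] [Module ℝ≥0∞ M] {s : Set M}
    (hs : ∀ x ∈ s, ∀ y ∈ s, ∀ t : ℝ, 0 ≤ t → t ≤ 1 →
      ENNReal.ofReal t • x + ENNReal.ofReal (1 - t) • y ∈ s) : Convex ℝ≥0 s := by
  intro x hx y hy t r _ _ htr
  have hr : 1 - (t : ℝ) = r := by rw [← NNReal.coe_one, ← htr, NNReal.coe_add]; ring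
  have ht : (t : ℝ) ≤ 1 := by exact_mod_cast htr ▸ le_self_add
  have := hs x hx y hy t t.2 ht
  rwa [hr, ENNReal.ofReal_coe_nnreal, ENNReal.ofReal_coe_nnreal] at this

lemma continuous_coe_add_coe_ennreal (a : ℝ) :
    Continuous fun t : ℝ≥0∞ => (a : EReal) + (t : EReal) :=
  continuous_iff_continuousAt.2 fun _ =>
    (EReal.continuousAt_add (.inl (EReal.coe_ne_top a)) (.inl (EReal.coe_ne_bot a))).comp₂
      continuousAt_const continuous_coe_ennreal_ereal.continuousAt

lemma monotone_coe_add_coe_ennreal (a : EReal) : Monotone fun t : ℝ≥0∞ => a + (t : EReal) :=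
  fun _ _ h => add_le_add_right (EReal.coe_ennreal_le_coe_ennreal_iff.2 h) a

/-- Minimax equality for bilinear expectations on finite × Polish
spaces; Lemma `lem:minimax`. -/
theorem statement16 [Fintype X] [MeasurableSingletonClass X]
    [TopologicalSpace Y] [PolishSpace Y] [BorelSpace Y]
    (a : ℝ) (b : X × Y → EReal) (hb : ∀ z, (a : EReal) ≤ b z) (hbm : Measurable b)
    (B : Set (Measure Y)) (hBne : B.Nonempty)
    (hBprob : ∀ ν ∈ B, IsProbabilityMeasure ν)
    (hBconv : ∀ ν₁ ∈ B, ∀ ν₂ ∈ B, ∀ t : ℝ, 0 ≤ t → t ≤ 1 →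
      (ENNReal.ofReal t) • ν₁ + (ENNReal.ofReal (1 - t)) • ν₂ ∈ B) :
    (⨅ (QX : Measure X) (_ : IsProbabilityMeasure QX), ⨆ ν ∈ B, bilin a b QX ν) =
      ⨆ ν ∈ B, ⨅ (QX : Measure X) (_ : IsProbabilityMeasure QX), bilin a b QX ν := by
  exact statement16_general (continuous_coe_add_coe_ennreal a) (monotone_coe_add_coe_ennreal a)
    (fun x y => er2en (b (x, y) - a)) hBne (convex_nnreal_of_forall_ofReal hBconv)

end BL
end
end

section
/- Lower convex envelopes commute with monotone infimization over orthants: let n ≥ 1, S := [0,∞)ⁿ, and f : S → ℝ. For y ∈ S let S_y := ∏ᵢ [yᵢ, ∞). Then the lower convex envelope of the function y ↦ inf_{x ∈ S_y} f(x) equals the function y ↦ inf_{x ∈ S_y} f̌(x), where f̌ is the lower convex envelope of f on S. The same identity holds when S_y is replaced by ∏ᵢ [0, yᵢ]. -/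
open MeasureTheory ProbabilityTheory Set Filter
open scoped ENNReal NNReal BigOperators Classical Topology

noncomputable section

namespace BL

variable {X : Type*} {Y : Type*} [MeasurableSpace X] [MeasurableSpace Y]

/-- Lower convex envelope on `S = [0,∞)ⁿ`, via convex combinations of `n + 2` points
(Carathéodory). -/
def lceN {n : ℕ} (F : (Fin n → ℝ) → EReal) (y : Fin n → ℝ) : EReal :=
  ⨅ (q : Fin (n + 2) → ℝ) (x : Fin (n + 2) → Fin n → ℝ)
    (_ : ∀ j, 0 ≤ q j) (_ : ∑ j, q j = 1) (_ : ∀ j i, 0 ≤ x j i)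
    (_ : ∀ i, ∑ j, q j * x j i = y i),
    ∑ j, (q j : EReal) * F (x j)

/-!
Both identities say that a lower convex envelope commutes with infimization along a correspondence
`z ↦ C z` of the orthant, namely `C z = Ici z` or `C z = Icc 0 z`.

For `≥`, a weighted sum of infima over the sets `C (w j)` is an infimum over all choices of points
`x j ∈ C (w j)`. As the graph of `C` is convex, `∑ q j • x j` lies in `C (∑ q j • w j)`, so each
such choice competes on the other side.

For `≤`, a pair `x ∈ C y` is realised by an affine self-map `T` of the orthant with `T x = y` and
`w ∈ C (T w)` throughout; `T` carries each convex decomposition of `x` to one of `y` whose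
infimized values are no larger. One can take the coordinatewise scaling by `y / x` for `Ici`,
and the translation by `y - x` for `Icc 0`.
-/

section WeightedInfima

theorem add_iInf {α : Type*} [Nonempty α] {c : EReal} {u : α → EReal} (hc : c ≠ ⊤)
    (hu : ∀ a, u a ≠ ⊤) : c + ⨅ a, u a = ⨅ a, c + u a := by
  have hinf : ⨅ a, u a ≠ ⊤ := ne_top_of_le_ne_top (hu (Classical.arbitrary α)) (iInf_le u _)
  have hcont : ContinuousAt (fun b : EReal => c + b) (⨅ a, u a) :=
    (EReal.continuousAt_add (p := (c, ⨅ a, u a)) (.inl hc) (.inr hinf)).comp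
      (continuousAt_const.prodMk continuousAt_id)
  exact Monotone.map_ciInf_of_continuousAt hcont fun _ _ h => add_le_add_right h c

theorem coe_mul_iInf {α : Type*} [Nonempty α] {q : ℝ} (hq : 0 ≤ q) (u : α → EReal) :
    (q : EReal) * ⨅ a, u a = ⨅ a, (q : EReal) * u a := by
  rcases hq.eq_or_lt with rfl | hq_pos
  · simp
  have hq₀ : (q : EReal) ≠ 0 := EReal.coe_ne_zero.2 hq_pos.ne'
  have hcont : ContinuousAt (fun b : EReal => (q : EReal) * b) (⨅ a, u a) :=
    (EReal.continuousAt_mul (p := (q, ⨅ a, u a)) (.inl hq₀) (.inl hq₀) (.inl (EReal.coe_ne_bot q))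
      (.inl (EReal.coe_ne_top q))).comp (continuousAt_const.prodMk continuousAt_id)
  exact Monotone.map_ciInf_of_continuousAt hcont
    fun _ _ h => mul_le_mul_of_nonneg_left h (EReal.coe_nonneg.2 hq)

theorem coe_mul_ne_top {q : ℝ} (hq : 0 ≤ q) {a : EReal} (ha : a ≠ ⊤) : (q : EReal) * a ≠ ⊤ := by
  simp [EReal.mul_ne_top, ha, hq, EReal.coe_nonneg]

theorem sum_ne_top {ι : Type*} {s : Finset ι} {u : ι → EReal} (hu : ∀ j ∈ s, u j ≠ ⊤) :
    ∑ j ∈ s, u j ≠ ⊤ :=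
  Finset.sum_induction u (· ≠ ⊤) (fun _ _ => EReal.add_ne_top) EReal.zero_ne_top hu

theorem sum_iInf {ι : Type*} {α : ι → Type*} [∀ j, Nonempty (α j)] {F : ∀ j, α j → EReal}
    (hF : ∀ j a, F j a ≠ ⊤) (s : Finset ι) :
    ∑ j ∈ s, ⨅ a, F j a = ⨅ x : ∀ j, α j, ∑ j ∈ s, F j (x j) := by
  refine le_antisymm (le_iInf fun x => Finset.sum_le_sum fun j _ => iInf_le _ _) ?_
  induction s using Finset.induction_on with
  | empty => simp
  | insert i s hi ih =>
    have hinf : ⨅ a, F i a ≠ ⊤ :=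
      ne_top_of_le_ne_top (hF i (Classical.arbitrary _)) (iInf_le (F i) _)
    have hsum (x : ∀ j, α j) : ∑ j ∈ s, F j (x j) ≠ ⊤ := sum_ne_top fun j _ => hF j (x j)
    have hupdate (x : ∀ j, α j) (a : α i) :
        ∑ j ∈ insert i s, F j (Function.update x i a j) = ∑ j ∈ s, F j (x j) + F i a := by
      rw [Finset.sum_insert hi, Function.update_self, add_comm]
      congr 1
      exact Finset.sum_congr rfl fun j hj => by
        rw [Function.update_of_ne (ne_of_mem_of_not_mem hj hi)]
    calc ⨅ x : ∀ j, α j, ∑ j ∈ insert i s, F j (x j)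
        ≤ ⨅ x : ∀ j, α j, ⨅ a, ∑ j ∈ s, F j (x j) + F i a :=
          le_iInf₂ fun x a => (iInf_le _ (Function.update x i a)).trans_eq (hupdate x a)
      _ = (⨅ a, F i a) + ⨅ x : ∀ j, α j, ∑ j ∈ s, F j (x j) := by
          simp_rw [add_iInf hinf hsum, add_comm (⨅ a, F i a), add_iInf (hsum _) (hF i)]
      _ ≤ (⨅ a, F i a) + ∑ j ∈ s, ⨅ a, F j a := by gcongr
      _ = ∑ j ∈ insert i s, ⨅ a, F j a :=
          (Finset.sum_insert (f := fun j => ⨅ a, F j a) hi).symm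

theorem sum_coe_mul_biInf {ι E : Type*} {s : Finset ι} {q : ι → ℝ} (hq : ∀ j, 0 ≤ q j)
    {C : ι → Set E} (hC : ∀ j, (C j).Nonempty) {f : E → EReal} (hf : ∀ j, ∀ a ∈ C j, f a ≠ ⊤) :
    ∑ j ∈ s, (q j : EReal) * ⨅ a ∈ C j, f a =
      ⨅ x : ∀ j, C j, ∑ j ∈ s, (q j : EReal) * f (x j) := by
  have (j : ι) : Nonempty (C j) := (hC j).to_subtype
  simp_rw [iInf_subtype', coe_mul_iInf (hq _)]
  exact sum_iInf (α := fun j => C j) (fun j a => coe_mul_ne_top (hq j) (hf j a a.2)) s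

end WeightedInfima

section LowerConvexEnvelope

variable {n : ℕ} {F G : (Fin n → ℝ) → EReal}

theorem lceN_sum_le {q : Fin (n + 2) → ℝ} {x : Fin (n + 2) → Fin n → ℝ}
    (hq : q ∈ stdSimplex ℝ (Fin (n + 2))) (hx : ∀ j, 0 ≤ x j) :
    lceN F (∑ j, q j • x j) ≤ ∑ j, (q j : EReal) * F (x j) :=
  iInf₂_le_of_le q x <| iInf₂_le_of_le hq.1 hq.2 <| iInf₂_le hx fun i => by
    simp only [Finset.sum_apply, Pi.smul_apply, smul_eq_mul]

theorem le_lceN {y : Fin n → ℝ} {c : EReal}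
    (h : ∀ (q : Fin (n + 2) → ℝ) (x : Fin (n + 2) → Fin n → ℝ),
      q ∈ stdSimplex ℝ (Fin (n + 2)) → (∀ j, 0 ≤ x j) → ∑ j, q j • x j = y →
        c ≤ ∑ j, (q j : EReal) * F (x j)) :
    c ≤ lceN F y :=
  le_iInf₂ fun q x => le_iInf₂ fun hq₀ hq₁ => le_iInf₂ fun hx hy =>
    h q x ⟨hq₀, hq₁⟩ hx <| funext fun i => by
      simpa only [Finset.sum_apply, Pi.smul_apply, smul_eq_mul] using hy i

theorem lceN_affineMap_le (T : (Fin n → ℝ) →ᵃ[ℝ] (Fin n → ℝ)) (hT : ∀ w, 0 ≤ w → 0 ≤ T w)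
    (hGF : ∀ w, 0 ≤ w → G (T w) ≤ F w) (x : Fin n → ℝ) : lceN G (T x) ≤ lceN F x := by
  refine le_lceN fun q w hq hw hx => ?_
  have hTx : T x = ∑ j, q j • T (w j) := by
    rw [← hx, ← Finset.univ.affineCombination_eq_linear_combination w q hq.2,
      Finset.univ.map_affineCombination w q hq.2,
      Finset.univ.affineCombination_eq_linear_combination _ q hq.2]
    rfl
  calc lceN G (T x)
      ≤ ∑ j, (q j : EReal) * G (T (w j)) := hTx ▸ lceN_sum_le hq fun j => hT _ (hw j)
    _ ≤ ∑ j, (q j : EReal) * F (w j) := Finset.sum_le_sum fun j _ =>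
        mul_le_mul_of_nonneg_left (hGF _ (hw j)) (EReal.coe_nonneg.2 (hq.1 j))

end LowerConvexEnvelope

section Exchange

variable {n : ℕ} {f : (Fin n → ℝ) → EReal}

theorem biInf_lceN_le_lceN_biInf {C : (Fin n → ℝ) → Set (Fin n → ℝ)}
    (hC : Convex ℝ {p : (Fin n → ℝ) × (Fin n → ℝ) | p.2 ∈ C p.1})
    (hne : ∀ z, 0 ≤ z → (C z).Nonempty) (hnonneg : ∀ z, 0 ≤ z → C z ⊆ Ici 0)
    (hf : ∀ x, 0 ≤ x → f x ≠ ⊤) (y : Fin n → ℝ) :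
    ⨅ x ∈ C y, lceN f x ≤ lceN (fun z => ⨅ x ∈ C z, f x) y := by
  refine le_lceN fun q w hq hw hy => ?_
  rw [sum_coe_mul_biInf hq.1 (fun j => hne _ (hw j)) fun j a ha => hf a (hnonneg _ (hw j) ha)]
  refine le_iInf fun x => ?_
  have hmem : ∑ j, q j • (x j : Fin n → ℝ) ∈ C y := by
    have := hC.sum_mem (fun j _ => hq.1 j) hq.2 (z := fun j => (w j, (x j : Fin n → ℝ)))
      fun j _ => (x j).2
    simpa only [mem_ofPred_eq, Prod.fst_sum, Prod.snd_sum, Prod.smul_mk, hy] using this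
  exact (iInf₂_le _ hmem).trans (lceN_sum_le hq fun j => hnonneg _ (hw j) (x j).2)

theorem lceN_biInf_Ici_le_lceN {x y : Fin n → ℝ} (hy : 0 ≤ y) (hyx : y ≤ x) :
    lceN (fun z => ⨅ a ∈ Ici z, f a) y ≤ lceN f x := by
  have hr₀ : 0 ≤ y / x := fun i => div_nonneg (hy i) ((hy i).trans (hyx i))
  have hr₁ : y / x ≤ 1 := fun i => div_le_one_of_le₀ (hyx i) ((hy i).trans (hyx i))
  have hTx : y / x * x = y := funext fun i =>
    -- at a coordinate where `x` vanishes so does `y`, and the junk value `y / 0` is harmless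
    div_mul_cancel_of_imp fun hx₀ => le_antisymm (hx₀ ▸ hyx i) (hy i)
  have := lceN_affineMap_le (F := f) (G := fun z => ⨅ a ∈ Ici z, f a)
    (LinearMap.mulLeft ℝ (y / x)).toAffineMap (fun w hw => mul_nonneg hr₀ hw)
    (fun w hw => iInf₂_le w (mul_le_of_le_one_left hw hr₁)) x
  rwa [LinearMap.coe_toAffineMap, LinearMap.mulLeft_apply, hTx] at this

theorem lceN_biInf_Icc_le_lceN {x y : Fin n → ℝ} (hxy : x ≤ y) :
    lceN (fun z => ⨅ a ∈ Icc 0 z, f a) y ≤ lceN f x := by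
  have hd : 0 ≤ y - x := sub_nonneg.2 hxy
  have := lceN_affineMap_le (F := f) (G := fun z => ⨅ a ∈ Icc 0 z, f a)
    (AffineEquiv.constVAdd ℝ (Fin n → ℝ) (y - x)).toAffineMap (fun w hw => add_nonneg hd hw)
    (fun w hw => iInf₂_le w ⟨hw, le_add_of_nonneg_left hd⟩) x
  simpa using this

theorem lceN_biInf_Ici (hf : ∀ x, 0 ≤ x → f x ≠ ⊤) {y : Fin n → ℝ} (hy : 0 ≤ y) :
    lceN (fun z => ⨅ x ∈ Ici z, f x) y = ⨅ x ∈ Ici y, lceN f x := by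
  have hgraph : Convex ℝ {p : (Fin n → ℝ) × (Fin n → ℝ) | p.2 ∈ Ici p.1} := by
    intro p (hp : p.1 ≤ p.2) p' (hp' : p'.1 ≤ p'.2) a b ha hb _
    exact add_le_add (smul_le_smul_of_nonneg_left hp ha) (smul_le_smul_of_nonneg_left hp' hb)
  exact le_antisymm (le_iInf₂ fun x hx => lceN_biInf_Ici_le_lceN hy hx)
    (biInf_lceN_le_lceN_biInf hgraph (fun z _ => nonempty_Ici) (fun z hz => Ici_subset_Ici.2 hz)
      hf y)

theorem lceN_biInf_Icc (hf : ∀ x, 0 ≤ x → f x ≠ ⊤) (y : Fin n → ℝ) :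
    lceN (fun z => ⨅ x ∈ Icc 0 z, f x) y = ⨅ x ∈ Icc 0 y, lceN f x := by
  have hgraph : Convex ℝ {p : (Fin n → ℝ) × (Fin n → ℝ) | p.2 ∈ Icc 0 p.1} := by
    intro p hp p' hp' a b ha hb _
    exact ⟨add_nonneg (smul_nonneg ha hp.1) (smul_nonneg hb hp'.1),
      add_le_add (smul_le_smul_of_nonneg_left hp.2 ha) (smul_le_smul_of_nonneg_left hp'.2 hb)⟩
  exact le_antisymm (le_iInf₂ fun x hx => lceN_biInf_Icc_le_lceN hx.2)
    (biInf_lceN_le_lceN_biInf hgraph (fun z hz => nonempty_Icc.2 hz)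
      (fun z _ => Icc_subset_Ici_self) hf y)

end Exchange

theorem statement17_general (n : ℕ) (f : (Fin n → ℝ) → EReal)
    (hf : ∀ x : Fin n → ℝ, (∀ i, 0 ≤ x i) → f x ≠ ⊤) :
    (∀ y : Fin n → ℝ, (∀ i, 0 ≤ y i) →
      lceN (fun z => ⨅ (x : Fin n → ℝ) (_ : ∀ i, z i ≤ x i), f x) y =
        ⨅ (x : Fin n → ℝ) (_ : ∀ i, y i ≤ x i), lceN f x) ∧
    (∀ y : Fin n → ℝ, (∀ i, 0 ≤ y i) →
      lceN (fun z => ⨅ (x : Fin n → ℝ) (_ : ∀ i, 0 ≤ x i) (_ : ∀ i, x i ≤ z i), f x) y =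
        ⨅ (x : Fin n → ℝ) (_ : ∀ i, 0 ≤ x i) (_ : ∀ i, x i ≤ y i), lceN f x) := by
  refine ⟨fun y hy => lceN_biInf_Ici hf hy, fun y _ => ?_⟩
  simpa only [mem_Icc, iInf_and, Pi.le_def, Pi.zero_apply] using lceN_biInf_Icc hf y

/-- Lower convex envelopes commute with monotone infimization over
orthants; Lemma `lem:exchange`. -/
theorem statement17 (n : ℕ) (hn : 1 ≤ n) (f : (Fin n → ℝ) → ℝ) :
    (∀ y : Fin n → ℝ, (∀ i, 0 ≤ y i) →
      lceN (fun z => ⨅ (x : Fin n → ℝ) (_ : ∀ i, z i ≤ x i), ((f x : ℝ) : EReal)) y =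
        ⨅ (x : Fin n → ℝ) (_ : ∀ i, y i ≤ x i), lceN (fun z => ((f z : ℝ) : EReal)) x) ∧
    (∀ y : Fin n → ℝ, (∀ i, 0 ≤ y i) →
      lceN (fun z =>
          ⨅ (x : Fin n → ℝ) (_ : ∀ i, 0 ≤ x i) (_ : ∀ i, x i ≤ z i),
            ((f x : ℝ) : EReal)) y =
        ⨅ (x : Fin n → ℝ) (_ : ∀ i, 0 ≤ x i) (_ : ∀ i, x i ≤ y i),
          lceN (fun z => ((f z : ℝ) : EReal)) x) :=
  statement17_general n (fun x => f x) fun x _ => EReal.coe_ne_top (f x)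

end BL
end
end
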